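/- arXiv:1406.5458 — 2 statements merged into one kernel-verified Lean document; each statement's English description precedes it below -/
import Mathlib

section
/- For all n ≥ 1, the total number of occurrences of the smallest part among overpartitions of 3n whose smallest part is even and not overlined is divisible by 3. -/
/-- An overpartition of `n`: a partition of `n` together with a set of part
sizes that are overlined (the first occurrence of each such size is overlined). -/
def Overpartition (n : ℕ) : Type :=
  Σ p : Nat.Partition n, {s : Finset ℕ // s ⊆ p.parts.toFinset}

noncomputable instance (n : ℕ) : Fintype (Overpartition n) := by
  unfold Overpartition
  classical
  have : ∀ p : Nat.Partition n, Fintype {s : Finset ℕ // s ⊆ p.parts.toFinset} := fun p =>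
    Fintype.subtype p.parts.toFinset.powerset (by simp)
  exact Sigma.instFintype

/-- The smallest part of a partition (junk value `0` for the empty partition). -/
noncomputable def smallestPart {n : ℕ} (p : Nat.Partition n) : ℕ :=
  sInf {m | m ∈ p.parts}

open scoped Classical in
/-- `spt2bar n`: the total number of occurrences of the smallest part, summed over
all overpartitions of `n` whose smallest part is even and not overlined. -/
noncomputable def spt2bar (n : ℕ) : ℕ :=
  ∑ o : Overpartition n,
    if Even (smallestPart o.1) ∧ smallestPart o.1 ∉ o.2.1 then
      o.1.parts.count (smallestPart o.1)
    else 0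

namespace Spt2

/-- Triples `(s, d, j)` with `d, j ≥ 1` and `s² + 2 d j = n`. -/
noncomputable def Sset (n : ℤ) : Finset (ℤ × ℤ × ℤ) :=
  ((Finset.Icc (-n) n) ×ˢ (Finset.Icc 1 n) ×ˢ (Finset.Icc 1 n)).filter
    (fun v => v.1 ^ 2 + 2 * v.2.1 * v.2.2 = n)

/-- Triples `(M, r, k)` with `r, k ≥ 1` and `M² + r² + 2 r k = n`. -/
noncomputable def Vset (n : ℤ) : Finset (ℤ × ℤ × ℤ) :=
  ((Finset.Icc (-n) n) ×ˢ (Finset.Icc 1 n) ×ˢ (Finset.Icc 1 n)).filter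
    (fun v => v.1 ^ 2 + v.2.1 ^ 2 + 2 * v.2.1 * v.2.2 = n)

lemma mem_Sset (n s d j : ℤ) :
    (s, d, j) ∈ Sset n ↔ 1 ≤ d ∧ 1 ≤ j ∧ s ^ 2 + 2 * d * j = n := by
  simp only [Sset, Finset.mem_filter, Finset.mem_product, Finset.mem_Icc]
  constructor
  · rintro ⟨⟨_, ⟨h1, _⟩, h2, _⟩, h⟩
    exact ⟨h1, h2, h⟩
  · rintro ⟨h1, h2, h⟩
    have h3 : 1 ≤ d * j := by nlinarith
    refine ⟨⟨⟨?_, ?_⟩, ⟨h1, ?_⟩, h2, ?_⟩, h⟩ <;> nlinarith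

lemma mem_Vset (n s d j : ℤ) :
    (s, d, j) ∈ Vset n ↔ 1 ≤ d ∧ 1 ≤ j ∧ s ^ 2 + d ^ 2 + 2 * d * j = n := by
  simp only [Vset, Finset.mem_filter, Finset.mem_product, Finset.mem_Icc]
  constructor
  · rintro ⟨⟨_, ⟨h1, _⟩, h2, _⟩, h⟩
    exact ⟨h1, h2, h⟩
  · rintro ⟨h1, h2, h⟩
    have h3 : 1 ≤ d * j := by nlinarith
    refine ⟨⟨⟨?_, ?_⟩, ⟨h1, ?_⟩, h2, ?_⟩, h⟩ <;> nlinarith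

/-- The weight. -/
def wt (v : ℤ × ℤ × ℤ) : ZMod 3 := (1 + (v.1 : ZMod 3) ^ 2) * (v.2.1 + v.2.2)

lemma two_mul_cancel (x : ZMod 3) (h : x = -x) : x = 0 := by
  revert x; decide

lemma cast_zero {n : ℤ} (hn : 3 ∣ n) : (n : ZMod 3) = 0 :=
  (ZMod.intCast_zmod_eq_zero_iff_dvd n 3).2 (by exact_mod_cast hn)

lemma cast_S {n s d j : ℤ} (hn : 3 ∣ n) (h : s ^ 2 + 2 * d * j = n) :
    (s : ZMod 3) ^ 2 + 2 * d * j = 0 := by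
  rw [← cast_zero hn, ← h]; push_cast; ring

lemma cast_V {n s d j : ℤ} (hn : 3 ∣ n) (h : s ^ 2 + d ^ 2 + 2 * d * j = n) :
    (s : ZMod 3) ^ 2 + d ^ 2 + 2 * d * j = 0 := by
  rw [← cast_zero hn, ← h]; push_cast; ring

/-- interior of the middle region cancels -/
lemma sum_Y (n : ℤ) (hn : 3 ∣ n) :
    ∑ v ∈ (Sset n).filter (fun v => v.2.2 < 2 * (v.2.1 - v.1) ∧ v.2.1 < 2 * (v.2.2 + v.1)), wt v
      = 0 := by
  apply two_mul_cancel
  rw [← Finset.sum_neg_distrib]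
  refine Finset.sum_nbij'
    (fun v => (-3 * v.1 + 2 * v.2.1 - 2 * v.2.2, 2 * v.2.1 - 2 * v.1 - v.2.2,
      2 * v.2.2 + 2 * v.1 - v.2.1))
    (fun v => (-3 * v.1 + 2 * v.2.1 - 2 * v.2.2, 2 * v.2.1 - 2 * v.1 - v.2.2,
      2 * v.2.2 + 2 * v.1 - v.2.1)) ?_ ?_ ?_ ?_ ?_
  · rintro ⟨s, d, j⟩ h
    simp only [Finset.mem_filter, mem_Sset] at h ⊢
    obtain ⟨⟨h1, h2, h3⟩, h4, h5⟩ := h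
    refine ⟨⟨by linarith, by linarith, ?_⟩, by linarith, by linarith⟩
    rw [← h3]; ring
  · rintro ⟨s, d, j⟩ h
    simp only [Finset.mem_filter, mem_Sset] at h ⊢
    obtain ⟨⟨h1, h2, h3⟩, h4, h5⟩ := h
    refine ⟨⟨by linarith, by linarith, ?_⟩, by linarith, by linarith⟩
    rw [← h3]; ring
  · rintro ⟨s, d, j⟩ h
    ext <;> simp <;> ring
  · rintro ⟨s, d, j⟩ h
    ext <;> simp <;> ring
  · rintro ⟨s, d, j⟩ h
    simp only [Finset.mem_filter, mem_Sset] at h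
    have := cast_S hn h.1.2.2
    simp only [wt]
    push_cast
    generalize (s : ZMod 3) = s at *
    generalize (d : ZMod 3) = d at *
    generalize (j : ZMod 3) = j at *
    clear h
    revert s d j; decide

lemma sum_edge (n : ℤ) (hn : 3 ∣ n) :
    ∑ v ∈ (Sset n).filter (fun v => v.2.2 = 2 * (v.2.1 - v.1)), wt v = 0 := by
  apply two_mul_cancel
  rw [← Finset.sum_neg_distrib]
  refine Finset.sum_nbij'
    (fun v => (-v.1, v.2.1 - v.1, 2 * v.2.1)) (fun v => (-v.1, v.2.1 - v.1, 2 * v.2.1))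
    ?_ ?_ ?_ ?_ ?_
  · rintro ⟨s, d, j⟩ h
    simp only [Finset.mem_filter, mem_Sset] at h ⊢
    obtain ⟨⟨h1, h2, h3⟩, h4⟩ := h
    refine ⟨⟨by linarith, by linarith, ?_⟩, by linarith⟩
    rw [← h3, h4]; ring
  · rintro ⟨s, d, j⟩ h
    simp only [Finset.mem_filter, mem_Sset] at h ⊢
    obtain ⟨⟨h1, h2, h3⟩, h4⟩ := h
    refine ⟨⟨by linarith, by linarith, ?_⟩, by linarith⟩
    rw [← h3, h4]; ring
  · rintro ⟨s, d, j⟩ h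
    simp only [Finset.mem_filter, mem_Sset] at h
    ext <;> simp <;> linarith
  · rintro ⟨s, d, j⟩ h
    simp only [Finset.mem_filter, mem_Sset] at h
    ext <;> simp <;> linarith
  · rintro ⟨s, d, j⟩ h
    simp only [Finset.mem_filter, mem_Sset] at h
    have := cast_S hn h.1.2.2
    have h2 : (j : ZMod 3) = 2 * (d - s) := by rw [h.2]; push_cast; ring
    simp only [wt]
    push_cast
    generalize (s : ZMod 3) = s at *
    generalize (d : ZMod 3) = d at *
    generalize (j : ZMod 3) = j at *
    clear h
    revert s d j; decide

lemma wt_flip (s d j : ℤ) : wt (-s, j, d) = wt (s, d, j) := by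
  simp only [wt]; push_cast; ring

/-- flip invariance -/
lemma sum_flip (n : ℤ) (P : ℤ × ℤ × ℤ → Prop) [DecidablePred P] :
    ∑ v ∈ (Sset n).filter P, wt v
      = ∑ v ∈ (Sset n).filter (fun v => P (-v.1, v.2.2, v.2.1)), wt v := by
  refine Finset.sum_nbij' (fun v => (-v.1, v.2.2, v.2.1)) (fun v => (-v.1, v.2.2, v.2.1))
    ?_ ?_ ?_ ?_ ?_
  · rintro ⟨s, d, j⟩ h
    simp only [Finset.mem_filter, mem_Sset] at h ⊢
    obtain ⟨⟨h1, h2, h3⟩, h4⟩ := h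
    exact ⟨⟨h2, h1, by rw [← h3]; ring⟩, by simpa using h4⟩
  · rintro ⟨s, d, j⟩ h
    simp only [Finset.mem_filter, mem_Sset] at h ⊢
    obtain ⟨⟨h1, h2, h3⟩, h4⟩ := h
    exact ⟨⟨h2, h1, by rw [← h3]; ring⟩, by simpa using h4⟩
  · rintro ⟨s, d, j⟩ h; simp
  · rintro ⟨s, d, j⟩ h; simp
  · rintro ⟨s, d, j⟩ h; exact (wt_flip s d j).symm

/-- the total is twice the `C` sum -/
lemma sum_B (n : ℤ) (hn : 3 ∣ n) :
    ∑ v ∈ Sset n, wt v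
      = 2 * ∑ v ∈ (Sset n).filter (fun v => 2 * (v.2.1 - v.1) < v.2.2), wt v := by
  have e1 := sum_flip n (fun v => 2 * (v.2.1 - v.1) < v.2.2)
  have e2 := sum_flip n (fun v => v.2.2 = 2 * (v.2.1 - v.1))
  have e3 := sum_Y n hn
  have e4 := sum_edge n hn
  rw [e4] at e2
  rw [Finset.sum_filter] at e1 e2 e3 e4
  rw [two_mul, Finset.sum_filter]
  nth_rewrite 2 [e1]
  rw [Finset.sum_filter, ← Finset.sum_add_distrib]
  rw [← sub_eq_zero, ← Finset.sum_sub_distrib]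
  have e5 := congrArg₂ (· + ·) (congrArg₂ (· + ·) e3 e4) e2.symm
  simp only [← Finset.sum_add_distrib, add_zero] at e5
  refine Eq.trans ?_ e5
  refine Finset.sum_congr rfl ?_
  rintro ⟨s, d, j⟩ h
  rw [mem_Sset] at h
  obtain ⟨h1, h2, h3⟩ := h
  simp only
  split_ifs <;> first | omega | ring

/-- the reflection `s ↦ 2 d - s`. -/
lemma sum_C (n : ℤ) (hn : 3 ∣ n) :
    ∑ v ∈ (Sset n).filter (fun v => 2 * (v.2.1 - v.1) < v.2.2), wt v
     = ∑ v ∈ (Sset n).filter (fun v => v.2.1 < v.1), wt v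
      + ∑ v ∈ (Sset n).filter (fun v => v.2.1 ≤ v.1), wt v := by
  have e : ∑ v ∈ (Sset n).filter (fun v => v.2.1 ≤ v.1), wt v
      = ∑ v ∈ (Sset n).filter (fun v => v.1 ≤ v.2.1 ∧ 2 * (v.2.1 - v.1) < v.2.2), wt v := by
    refine Finset.sum_nbij' (fun v => (2 * v.2.1 - v.1, v.2.1, v.2.2 + 2 * v.1 - 2 * v.2.1))
      (fun v => (2 * v.2.1 - v.1, v.2.1, v.2.2 + 2 * v.1 - 2 * v.2.1)) ?_ ?_ ?_ ?_ ?_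
    · rintro ⟨s, d, j⟩ h
      simp only [Finset.mem_filter, mem_Sset] at h ⊢
      obtain ⟨⟨h1, h2, h3⟩, h4⟩ := h
      refine ⟨⟨h1, by linarith, by rw [← h3]; ring⟩, by linarith, by linarith⟩
    · rintro ⟨s, d, j⟩ h
      simp only [Finset.mem_filter, mem_Sset] at h ⊢
      obtain ⟨⟨h1, h2, h3⟩, h4, h5⟩ := h
      refine ⟨⟨h1, by linarith, by rw [← h3]; ring⟩, by linarith⟩
    · rintro ⟨s, d, j⟩ h; ext <;> simp; ring
    · rintro ⟨s, d, j⟩ h; ext <;> simp; ring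
    · rintro ⟨s, d, j⟩ h
      simp only [Finset.mem_filter, mem_Sset] at h
      have := cast_S hn h.1.2.2
      simp only [wt]
      push_cast
      generalize (s : ZMod 3) = s at *
      generalize (d : ZMod 3) = d at *
      generalize (j : ZMod 3) = j at *
      clear h
      revert s d j; decide
  rw [e]
  simp only [Finset.sum_filter]
  rw [← Finset.sum_add_distrib]
  refine Finset.sum_congr rfl ?_
  rintro ⟨s, d, j⟩ h
  rw [mem_Sset] at h
  obtain ⟨h1, h2, h3⟩ := h
  simp only
  split_ifs <;> first | omega | ring

/-- weight on `Vset` -/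
def wV (v : ℤ × ℤ × ℤ) : ZMod 3 := (1 + (v.1 : ZMod 3) ^ 2) * v.2.2

lemma V_neg (n : ℤ) :
    ∑ v ∈ (Vset n).filter (fun v => v.1 < 0 ∧ -v.1 < v.2.2), wV v
      = ∑ v ∈ (Vset n).filter (fun v => 0 < v.1 ∧ v.1 < v.2.2), wV v := by
  refine Finset.sum_nbij' (fun v => (-v.1, v.2.1, v.2.2)) (fun v => (-v.1, v.2.1, v.2.2))
    ?_ ?_ ?_ ?_ ?_
  · rintro ⟨s, d, j⟩ h
    simp only [Finset.mem_filter, mem_Vset] at h ⊢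
    obtain ⟨⟨h1, h2, h3⟩, h4⟩ := h
    exact ⟨⟨h1, h2, by rw [← h3]; ring⟩, by omega⟩
  · rintro ⟨s, d, j⟩ h
    simp only [Finset.mem_filter, mem_Vset] at h ⊢
    obtain ⟨⟨h1, h2, h3⟩, h4⟩ := h
    exact ⟨⟨h1, h2, by rw [← h3]; ring⟩, by omega⟩
  · rintro ⟨s, d, j⟩ h; simp
  · rintro ⟨s, d, j⟩ h; simp
  · rintro ⟨s, d, j⟩ h; simp [wV]

lemma V_to_S (n : ℤ) (hn : 3 ∣ n) (P : ℤ → Prop) [DecidablePred P] (hP : ∀ x, P x → 0 ≤ x) :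
    ∑ v ∈ (Vset n).filter (fun v => P v.1 ∧ v.1 < v.2.2), wV v
      = ∑ v ∈ (Sset n).filter (fun v => P (v.1 - v.2.1)), wt v := by
  refine Finset.sum_nbij' (fun v => (v.1 + v.2.1, v.2.1, v.2.2 - v.1))
    (fun v => (v.1 - v.2.1, v.2.1, v.2.2 + v.1 - v.2.1)) ?_ ?_ ?_ ?_ ?_
  · rintro ⟨s, d, j⟩ h
    simp only [Finset.mem_filter, mem_Sset, mem_Vset] at h ⊢
    obtain ⟨⟨h1, h2, h3⟩, h4, h5⟩ := h
    exact ⟨⟨h1, by linarith, by rw [← h3]; ring⟩, by simpa using h4⟩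
  · rintro ⟨s, d, j⟩ h
    simp only [Finset.mem_filter, mem_Sset, mem_Vset] at h ⊢
    obtain ⟨⟨h1, h2, h3⟩, h4⟩ := h
    have := hP _ h4
    exact ⟨⟨h1, by linarith, by rw [← h3]; ring⟩, h4, by linarith⟩
  · rintro ⟨s, d, j⟩ h; ext <;> simp; ring
  · rintro ⟨s, d, j⟩ h; ext <;> simp
  · rintro ⟨s, d, j⟩ h
    simp only [Finset.mem_filter, mem_Vset] at h
    have := cast_V hn h.1.2.2
    simp only [wt, wV]
    push_cast
    generalize (s : ZMod 3) = s at *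
    generalize (d : ZMod 3) = d at *
    generalize (j : ZMod 3) = j at *
    clear h
    revert s d j; decide

lemma V_big (n : ℤ) (hn : 3 ∣ n) :
    ∑ v ∈ (Vset n).filter (fun v => v.2.2 < v.1), wV v = 0 := by
  apply two_mul_cancel
  rw [← Finset.sum_neg_distrib]
  refine Finset.sum_nbij' (fun v => (v.2.1 + v.2.2, v.1 - v.2.2, v.2.2))
    (fun v => (v.2.1 + v.2.2, v.1 - v.2.2, v.2.2)) ?_ ?_ ?_ ?_ ?_
  · rintro ⟨s, d, j⟩ h
    simp only [Finset.mem_filter, mem_Vset] at h ⊢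
    obtain ⟨⟨h1, h2, h3⟩, h4⟩ := h
    exact ⟨⟨by linarith, h2, by rw [← h3]; ring⟩, by linarith⟩
  · rintro ⟨s, d, j⟩ h
    simp only [Finset.mem_filter, mem_Vset] at h ⊢
    obtain ⟨⟨h1, h2, h3⟩, h4⟩ := h
    exact ⟨⟨by linarith, h2, by rw [← h3]; ring⟩, by linarith⟩
  · rintro ⟨s, d, j⟩ h; ext <;> simp
  · rintro ⟨s, d, j⟩ h; ext <;> simp
  · rintro ⟨s, d, j⟩ h
    simp only [Finset.mem_filter, mem_Vset] at h
    have := cast_V hn h.1.2.2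
    simp only [wV]
    push_cast
    generalize (s : ZMod 3) = s at *
    generalize (d : ZMod 3) = d at *
    generalize (j : ZMod 3) = j at *
    clear h
    revert s d j; decide

lemma V_eq (n : ℤ) (hn : 3 ∣ n) :
    ∑ v ∈ (Vset n).filter (fun v => v.1 = v.2.2), wV v = 0 := by
  apply two_mul_cancel
  rw [← Finset.sum_neg_distrib]
  refine Finset.sum_nbij' (fun v => (v.2.1, v.2.2, v.2.1))
    (fun v => (v.2.1, v.2.2, v.2.1)) ?_ ?_ ?_ ?_ ?_
  · rintro ⟨s, d, j⟩ h
    simp only [Finset.mem_filter, mem_Vset] at h ⊢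
    obtain ⟨⟨h1, h2, h3⟩, h4⟩ := h
    exact ⟨⟨by linarith, by linarith, by rw [← h3, h4]; ring⟩, trivial⟩
  · rintro ⟨s, d, j⟩ h
    simp only [Finset.mem_filter, mem_Vset] at h ⊢
    obtain ⟨⟨h1, h2, h3⟩, h4⟩ := h
    exact ⟨⟨by linarith, by linarith, by rw [← h3, h4]; ring⟩, trivial⟩
  · rintro ⟨s, d, j⟩ h
    simp only [Finset.mem_filter, mem_Vset] at h
    ext <;> simp [h.2]
  · rintro ⟨s, d, j⟩ h
    simp only [Finset.mem_filter, mem_Vset] at h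
    ext <;> simp [h.2]
  · rintro ⟨s, d, j⟩ h
    simp only [Finset.mem_filter, mem_Vset] at h
    have := cast_V hn h.1.2.2
    simp only [wV]
    rw [← h.2] at this ⊢
    generalize (s : ZMod 3) = s at *
    generalize (d : ZMod 3) = d at *
    clear h
    revert s d; decide

/-- reflect `M` -/
lemma V_refl (n : ℤ) (P : ℤ × ℤ × ℤ → Prop) [DecidablePred P] :
    ∑ v ∈ (Vset n).filter P, wV v
      = ∑ v ∈ (Vset n).filter (fun v => P (-v.1, v.2.1, v.2.2)), wV v := by
  refine Finset.sum_nbij' (fun v => (-v.1, v.2.1, v.2.2)) (fun v => (-v.1, v.2.1, v.2.2))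
    ?_ ?_ ?_ ?_ ?_
  · rintro ⟨s, d, j⟩ h
    simp only [Finset.mem_filter, mem_Vset] at h ⊢
    obtain ⟨⟨h1, h2, h3⟩, h4⟩ := h
    exact ⟨⟨h1, h2, by rw [← h3]; ring⟩, by simpa using h4⟩
  · rintro ⟨s, d, j⟩ h
    simp only [Finset.mem_filter, mem_Vset] at h ⊢
    obtain ⟨⟨h1, h2, h3⟩, h4⟩ := h
    exact ⟨⟨h1, h2, by rw [← h3]; ring⟩, by simpa using h4⟩
  · rintro ⟨s, d, j⟩ h; simp
  · rintro ⟨s, d, j⟩ h; simp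
  · rintro ⟨s, d, j⟩ h; simp [wV]

lemma sum_V (n : ℤ) (hn : 3 ∣ n) :
    ∑ v ∈ Vset n, wV v
     = ∑ v ∈ (Sset n).filter (fun v => v.2.1 < v.1), wt v
      + ∑ v ∈ (Sset n).filter (fun v => v.2.1 ≤ v.1), wt v := by
  have e1 := V_to_S n hn (fun x => 0 < x) (fun x h => h.le)
  have e2 := V_to_S n hn (fun x => 0 ≤ x) (fun x h => h)
  simp only [sub_pos, sub_nonneg] at e1 e2
  rw [← e1, ← e2, ← V_neg]
  have e3 := V_refl n (fun v => v.2.2 < v.1)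
  have e4 := V_refl n (fun v => v.1 = v.2.2)
  rw [V_big n hn] at e3
  rw [V_eq n hn] at e4
  have e5 := V_big n hn
  have e6 := V_eq n hn
  simp only [Finset.sum_filter] at *
  have e7 := congrArg₂ (· + ·) (congrArg₂ (· + ·) e3 e4) (congrArg₂ (· + ·) e5.symm e6.symm)
  simp only [← Finset.sum_add_distrib, add_zero] at e7 ⊢
  rw [← sub_eq_zero, ← Finset.sum_sub_distrib]
  refine Eq.trans ?_ e7.symm
  refine Finset.sum_congr rfl ?_
  rintro ⟨s, d, j⟩ h
  rw [mem_Vset] at h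
  obtain ⟨h1, h2, h3⟩ := h
  simp only
  split_ifs <;> first | omega | ring

/-- The key congruence. -/
theorem key (n : ℤ) (hn : 3 ∣ n) :
    ∑ v ∈ Sset n, (1 + (v.1 : ZMod 3) ^ 2) * (v.2.2 : ZMod 3) + 2 * ∑ v ∈ Vset n, wV v = 0 := by
  have h1 := sum_B n hn
  have h2 := sum_V n hn
  rw [← sum_C n hn] at h2
  have h3 : ∑ v ∈ Sset n, wt v = 2 * ∑ v ∈ Sset n, (1 + (v.1 : ZMod 3) ^ 2) * (v.2.2 : ZMod 3) := by
    have h4 : ∑ v ∈ Sset n, (1 + (v.1 : ZMod 3) ^ 2) * (v.2.1 : ZMod 3)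
        = ∑ v ∈ Sset n, (1 + (v.1 : ZMod 3) ^ 2) * (v.2.2 : ZMod 3) := by
      refine Finset.sum_nbij' (fun v => (v.1, v.2.2, v.2.1)) (fun v => (v.1, v.2.2, v.2.1))
        ?_ ?_ ?_ ?_ ?_
      · rintro ⟨s, d, j⟩ h
        simp only [mem_Sset] at h ⊢
        exact ⟨h.2.1, h.1, by rw [← h.2.2]; ring⟩
      · rintro ⟨s, d, j⟩ h
        simp only [mem_Sset] at h ⊢
        exact ⟨h.2.1, h.1, by rw [← h.2.2]; ring⟩
      · rintro ⟨s, d, j⟩ h; simp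
      · rintro ⟨s, d, j⟩ h; simp
      · rintro ⟨s, d, j⟩ h; simp
    rw [two_mul]
    nth_rewrite 1 [← h4]
    rw [← Finset.sum_add_distrib]
    refine Finset.sum_congr rfl fun v _ => ?_
    simp only [wt]; ring
  rw [h1] at h3
  rw [h2]
  generalize ∑ v ∈ Sset n, (1 + (v.1 : ZMod 3) ^ 2) * (v.2.2 : ZMod 3) = a at *
  generalize ∑ v ∈ (Sset n).filter (fun v => 2 * (v.2.1 - v.1) < v.2.2), wt v = c at *
  clear h1 h2
  revert a c; decide

/-- The arithmetic function on the right-hand side. -/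
noncomputable def tt (L m : ℤ) : ZMod 3 :=
  ∑ p ∈ Finset.Icc 1 L ×ˢ Finset.Icc 1 L,
    ((if 2 * p.1 * p.2 = m then (p.2 : ZMod 3) else 0)
      + 2 * (if p.1 ^ 2 + 2 * p.1 * p.2 = m then (p.2 : ZMod 3) else 0))

lemma tt_one (L m : ℤ) (hm : (m : ZMod 3) = 1) : tt L m = 0 := by
  have e : tt L m = ∑ p ∈ Finset.Icc 1 L ×ˢ Finset.Icc 1 L,
      (if 2 * p.1 * p.2 = m then (p.2 : ZMod 3) else 0) := by
    refine Finset.sum_congr rfl ?_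
    rintro ⟨d, j⟩ _
    rw [add_eq_left]
    split_ifs with h
    · have h2 : (d : ZMod 3) ^ 2 + 2 * d * j = 1 := by rw [← hm, ← h]; push_cast; ring
      simp only
      generalize (d : ZMod 3) = d at *
      generalize (j : ZMod 3) = j at *
      clear h
      revert d j; decide
    · simp
  apply two_mul_cancel
  rw [eq_neg_iff_add_eq_zero, e]
  nth_rewrite 1 [Finset.sum_product_right]
  rw [Finset.sum_product, ← Finset.sum_add_distrib]
  refine Finset.sum_eq_zero fun d _ => ?_
  rw [← Finset.sum_add_distrib]
  refine Finset.sum_eq_zero fun j _ => ?_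
  simp only
  rw [mul_right_comm]
  split_ifs with h
  · have h2 : 2 * (d : ZMod 3) * j = 1 := by rw [← hm, ← h]; push_cast; ring
    generalize (d : ZMod 3) = d at *
    generalize (j : ZMod 3) = j at *
    clear h
    revert d j; decide
  · simp

lemma tt_key (n : ℤ) (hn : 3 ∣ n) :
    ∑ M ∈ Finset.Icc (-n) n, (1 + (M : ZMod 3) ^ 2) * tt n (n - M ^ 2) = 0 := by
  rw [← key n hn]
  simp only [tt, Sset, Vset, wV, Finset.sum_filter, Finset.sum_add_distrib, mul_add,
    Finset.mul_sum]
  congr 1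
  · rw [Finset.sum_product]
    refine Finset.sum_congr rfl fun M _ => Finset.sum_congr rfl ?_
    rintro ⟨d, j⟩ _
    simp only
    have : (2 * d * j = n - M ^ 2) ↔ (M ^ 2 + 2 * d * j = n) := by constructor <;> intro h <;> linarith
    simp only [this]
    split_ifs <;> simp
  · rw [Finset.sum_product]
    refine Finset.sum_congr rfl fun M _ => Finset.sum_congr rfl ?_
    rintro ⟨d, j⟩ _
    simp only
    have : (d ^ 2 + 2 * d * j = n - M ^ 2) ↔ (M ^ 2 + d ^ 2 + 2 * d * j = n) := by
      constructor <;> intro h <;> linarith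
    simp only [this]
    split_ifs
    · ring
    · simp

theorem stepC (g : ℤ → ZMod 3) (hg : ∀ m ≤ 0, g m = 0)
    (H : ∀ n m : ℤ, m ≤ n → ∑ M ∈ Finset.Icc (-n) n, g (m - M ^ 2) = tt n m) :
    ∀ k : ℕ, ((k : ZMod 3) = 0 ∨ (k : ZMod 3) = 1) → g k = 0 := by
  intro k
  induction k using Nat.strong_induction_on with
  | _ k ih =>
  have ih2 : ∀ m : ℤ, m < k → ((m : ZMod 3) = 0 ∨ (m : ZMod 3) = 1) → g m = 0 := by
    intro m hm h
    rcases le_or_gt m 0 with h0 | h0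
    · exact hg m h0
    · lift m to ℕ using h0.le
      exact ih m (by exact_mod_cast hm) (by simpa using h)
  intro hk
  rcases Nat.eq_zero_or_pos k with h0 | hpos
  · subst h0; exact hg _ (by simp)
  have hsq : ∀ M : ℤ, M ≠ 0 → 0 < M ^ 2 := fun M h => by positivity
  have m0 : (0 : ℤ) ∈ Finset.Icc (-(k : ℤ)) k := by simp
  rcases hk with hk | hk
  · have h3 : (3 : ℤ) ∣ k := by
      exact_mod_cast (ZMod.natCast_eq_zero_iff k 3).1 hk
    have e := tt_key k h3
    have e1 : ∀ M ∈ Finset.Icc (-(k : ℤ)) k, (1 + (M : ZMod 3) ^ 2) * tt k (k - M ^ 2)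
        = ∑ M' ∈ Finset.Icc (-(k : ℤ)) k, (1 + (M : ZMod 3) ^ 2) * g (k - M ^ 2 - M' ^ 2) := by
      intro M _
      rw [← H k _ (by nlinarith), Finset.mul_sum]
    rw [Finset.sum_congr rfl e1] at e
    have e2 := e
    rw [Finset.sum_comm] at e2
    have e3 := congrArg₂ (· + ·) e e2
    simp only [← Finset.sum_add_distrib, add_zero] at e3
    have e4 : ∀ M ∈ Finset.Icc (-(k : ℤ)) k, ∀ M' ∈ Finset.Icc (-(k : ℤ)) k, ¬ (M = 0 ∧ M' = 0) →
        (1 + (M : ZMod 3) ^ 2) * g (k - M ^ 2 - M' ^ 2)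
        + (1 + (M' : ZMod 3) ^ 2) * g (k - M' ^ 2 - M ^ 2) = 0 := by
      intro M _ M' _ hM
      have hlt : (k : ℤ) - M ^ 2 - M' ^ 2 < k := by
        rcases not_and_or.1 hM with h | h
        · have := hsq _ h; nlinarith
        · have := hsq _ h; nlinarith
      have h5 := ih2 _ hlt
      rw [sub_right_comm (k : ℤ) (M' ^ 2)]
      push_cast at h5
      rw [hk] at h5
      generalize g (k - M ^ 2 - M' ^ 2) = y at *
      generalize (M : ZMod 3) = a at *
      generalize (M' : ZMod 3) = b at *
      clear e3 e2 e e1 H hg ih2 ih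
      revert a b y; decide
    rw [Finset.sum_eq_single 0, Finset.sum_eq_single 0] at e3
    · simp only [Int.cast_zero, ne_eq, OfNat.ofNat_ne_zero, not_false_eq_true, zero_pow, add_zero,
        one_mul, sub_zero] at e3
      exact two_mul_cancel _ (eq_neg_of_add_eq_zero_left e3)
    · intro M' hM' h
      exact e4 0 m0 M' hM' (by tauto)
    · intro h; exact absurd m0 h
    · intro M hM h
      exact Finset.sum_eq_zero fun M' hM' => e4 M hM M' hM' (by tauto)
    · intro h; exact absurd m0 h
  · have e := H k k le_rfl
    rw [tt_one _ _ (by simpa using hk), Finset.sum_eq_single 0] at e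
    · simpa using e
    · intro M _ hM
      apply ih2
      · have := hsq _ hM; linarith
      · push_cast
        rw [hk]
        generalize (M : ZMod 3) = a
        revert a; decide
    · intro h; exact absurd m0 h

section fieldpart
variable {K : Type*} [Field K] (q : K) (C : ℕ → ℕ → K)

lemma C_zero (hC : ∀ n r, C n (r + 1) * (1 - q ^ (2 * (n + r + 1))) = C n r * (1 - q ^ (2 * (n - r))))
    (h1 : ∀ k, 1 ≤ k → 1 - q ^ k ≠ 0) (n r : ℕ) (h : n < r) : C n r = 0 := by
  induction r with
  | zero => omega
  | succ r ih =>
    have h2 := hC n r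
    have h3 : C n r * (1 - q ^ (2 * (n - r))) = 0 := by
      rcases Nat.lt_or_ge n r with h4 | h4
      · rw [ih h4, zero_mul]
      · have : n - r = 0 := by omega
        rw [this]; simp
    rw [h3] at h2
    exact (mul_eq_zero.1 h2).resolve_right (h1 _ (by omega))

lemma C_A (hC0 : ∀ n, C n 0 = 1)
    (hC : ∀ n r, C n (r + 1) * (1 - q ^ (2 * (n + r + 1))) = C n r * (1 - q ^ (2 * (n - r))))
    (h1 : ∀ k, 1 ≤ k → 1 - q ^ k ≠ 0) (n r : ℕ) :
    C (n + 1) r * ((1 - q ^ (2 * (n + 1 - r))) * (1 - q ^ (2 * (n + 1 + r))))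
      = C n r * (1 - q ^ (2 * (n + 1))) ^ 2 := by
  induction r with
  | zero => rw [hC0, hC0]; simp; ring
  | succ r ih =>
    rcases Nat.lt_or_ge n (r + 1) with h4 | h4
    · rw [C_zero q C hC h1 n _ h4]
      have : n + 1 - (r + 1) = 0 := by omega
      rw [this]; simp
    · have e1 := hC n r
      have e2 := hC (n + 1) r
      have hn : n + 1 - (r + 1) = n - r := by omega
      rw [hn]
      have h5 := h1 (2 * (n + r + 1)) (by omega)
      have e3 : 2 * (n + 1 + (r + 1)) = 2 * (n + 1 + r + 1) := by ring
      rw [e3]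
      have e4 : 2 * (n + 1 + r) = 2 * (n + r + 1) := by ring
      rw [e4] at ih
      apply mul_right_cancel₀ h5
      linear_combination (1 - q ^ (2 * (n - r))) * (1 - q ^ (2 * (n + r + 1))) * e2
        + (1 - q ^ (2 * (n - r))) * ih - (1 - q ^ (2 * (n + 1))) ^ 2 * e1

lemma C_B (hC0 : ∀ n, C n 0 = 1)
    (hC : ∀ n r, C n (r + 1) * (1 - q ^ (2 * (n + r + 1))) = C n r * (1 - q ^ (2 * (n - r))))
    (h1 : ∀ k, 1 ≤ k → 1 - q ^ k ≠ 0) (n r : ℕ) :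
    C (n + 1) (r + 1) * ((1 - q ^ (2 * (n + r + 1))) * (1 - q ^ (2 * (n + r + 2))))
      = C n r * (1 - q ^ (2 * (n + 1))) ^ 2 := by
  have e1 := C_A q C hC0 hC h1 n r
  have e2 := hC (n + 1) r
  rw [show n + 1 + r + 1 = n + r + 2 by ring] at e2
  rw [show n + 1 + r = n + r + 1 by ring] at e1
  linear_combination (1 - q ^ (2 * (n + r + 1))) * e2 + e1

/-- recurrence in `n` -/
lemma C_rec (hC0 : ∀ n, C n 0 = 1)
    (hC : ∀ n r, C n (r + 1) * (1 - q ^ (2 * (n + r + 1))) = C n r * (1 - q ^ (2 * (n - r))))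
    (h1 : ∀ k, 1 ≤ k → 1 - q ^ k ≠ 0) (n r : ℕ) (hr : r ≤ n) :
    (1 - q ^ (2 * (2 * n + 1))) * (1 - q ^ (2 * (2 * n + 2))) * C (n + 1) (r + 1)
      = (1 - q ^ (2 * (n + 1))) ^ 2 * ((1 + q ^ (4 * n + 2)) * C n (r + 1)
        + q ^ (2 * (n - r)) * C n r + q ^ (2 * (n + r + 2)) * C n (r + 2)) := by
  have e1 := C_B q C hC0 hC h1 n r
  have e2 := hC n r
  have e3 := hC n (r + 1)
  rw [show n + (r + 1) + 1 = n + r + 2 by ring] at e3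
  have d1 := h1 (2 * (n + r + 1)) (by omega)
  have d2 := h1 (2 * (n + r + 2)) (by omega)
  rw [← eq_div_iff (mul_ne_zero d1 d2)] at e1
  rw [← eq_div_iff d1] at e2
  rw [← eq_div_iff d2] at e3
  rw [e3, e2, e1]
  rcases Nat.eq_or_lt_of_le hr with h | h
  · subst h
    simp only [Nat.sub_self]
    field_simp
    ring
  · obtain ⟨m, rfl⟩ := Nat.exists_eq_add_of_lt h
    have f1 : r + m + 1 - r = m + 1 := by omega
    have f2 : r + m + 1 - (r + 1) = m := by omega
    rw [f1, f2]
    field_simp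
    ring

lemma C_rec0 (hC0 : ∀ n, C n 0 = 1)
    (hC : ∀ n r, C n (r + 1) * (1 - q ^ (2 * (n + r + 1))) = C n r * (1 - q ^ (2 * (n - r))))
    (n : ℕ) :
    (1 - q ^ (2 * (2 * n + 1))) * (1 - q ^ (2 * (2 * n + 2))) * C (n + 1) 0
      = (1 - q ^ (2 * (n + 1))) ^ 2 * ((1 + q ^ (4 * n + 2)) * C n 0
        + 2 * q ^ (2 * (n + 1)) * C n 1) := by
  have e2 := hC n 0
  rw [hC0] at *
  rw [hC0]
  simp only [zero_add, add_zero, Nat.sub_zero, one_mul] at e2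
  linear_combination (-2 * q ^ (2 * (n + 1)) * (1 - q ^ (2 * (n + 1)))) * e2

lemma jacobi (hC0 : ∀ n, C n 0 = 1)
    (hC : ∀ n r, C n (r + 1) * (1 - q ^ (2 * (n + r + 1))) = C n r * (1 - q ^ (2 * (n - r))))
    (h1 : ∀ k, 1 ≤ k → 1 - q ^ k ≠ 0) (h2 : ∀ k, 1 ≤ k → 1 + q ^ k ≠ 0)
    (P : ℕ → K) (hP0 : P 0 = 1)
    (hP : ∀ n, P (n + 1) * ((1 + q ^ (2 * n + 1)) * (1 + q ^ (2 * n + 2)))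
      = P n * ((1 - q ^ (2 * n + 1)) * (1 - q ^ (2 * n + 2)))) (n : ℕ) :
    P n = 1 + 2 * ∑ r ∈ Finset.range n, (-1) ^ (r + 1) * q ^ ((r + 1) ^ 2) * C n (r + 1) := by
  induction n with
  | zero => simpa using hP0
  | succ n ih =>
    have hz := C_zero q C hC h1
    -- the key sum relation
    set A : ℕ → K := fun r => (-1) ^ r * q ^ (r ^ 2) * C n r with hA
    have key : ∀ r ∈ Finset.range (n + 1),
        (1 - q ^ (2 * (2 * n + 1))) * (1 - q ^ (2 * (2 * n + 2))) *
          ((-1) ^ (r + 1) * q ^ ((r + 1) ^ 2) * C (n + 1) (r + 1))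
        = (1 - q ^ (2 * (n + 1))) ^ 2 * ((1 + q ^ (4 * n + 2)) * A (r + 1)
          - q ^ (2 * n + 1) * A r - q ^ (2 * n + 1) * A (r + 2)) := by
      intro r hr
      have hr' : r ≤ n := by simpa [Nat.lt_succ_iff] using hr
      have e := C_rec q C hC0 hC h1 n r hr'
      obtain ⟨m, rfl⟩ := Nat.exists_eq_add_of_le hr'
      rw [show r + m - r = m by omega] at e
      simp only [hA]
      linear_combination ((-1) ^ (r + 1) * q ^ ((r + 1) ^ 2)) * e
    have ks := Finset.sum_congr rfl key
    rw [← Finset.mul_sum, ← Finset.mul_sum, Finset.sum_sub_distrib, Finset.sum_sub_distrib,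
      ← Finset.mul_sum, ← Finset.mul_sum, ← Finset.mul_sum] at ks
    set S : K := ∑ r ∈ Finset.range n, A (r + 1) with hS
    have s1 : ∑ r ∈ Finset.range (n + 1), A (r + 1) = S := by
      rw [Finset.sum_range_succ, hA]
      simp [hz n (n + 1) (by omega), hS, hA]
    have s0 : ∑ r ∈ Finset.range (n + 1), A r = S + A 0 := by
      rw [Finset.sum_range_succ']
    have s2 : ∑ r ∈ Finset.range (n + 1), A (r + 2) = S - A 1 := by
      have : ∑ r ∈ Finset.range (n + 2), A (r + 1) = S := by
        rw [Finset.sum_range_succ, s1]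
        simp [hA, hz n (n + 1 + 1) (by omega)]
      rw [Finset.sum_range_succ'] at this
      rw [← this]; simp
    rw [s0, s1, s2] at ks
    have a0 : A 0 = 1 := by simp [hA, hC0]
    have a1 : A 1 = - q * C n 1 := by simp [hA]
    have r0 := C_rec0 q C hC0 hC n
    rw [hC0, hC0] at r0
    rw [a0, a1] at ks
    have ih' : P n = 1 + 2 * S := ih
    have d1 := h1 (2 * n + 1) (by omega)
    have d2 := h1 (2 * n + 2) (by omega)
    have d3 := h2 (2 * n + 1) (by omega)
    have d4 := h2 (2 * n + 2) (by omega)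
    apply mul_right_cancel₀ (mul_ne_zero (mul_ne_zero d1 d2) (mul_ne_zero d3 d4))
    have hp := hP n
    rw [ih'] at hp
    linear_combination ((1 - q ^ (2 * n + 1)) * (1 - q ^ (2 * n + 2))) * hp - 2 * ks - r0

lemma finite_id (hC0 : ∀ n, C n 0 = 1)
    (hC : ∀ n r, C n (r + 1) * (1 - q ^ (2 * (n + r + 1))) = C n r * (1 - q ^ (2 * (n - r))))
    (h1 : ∀ k, 1 ≤ k → 1 - q ^ k ≠ 0) (h2 : ∀ k, 1 ≤ k → 1 + q ^ k ≠ 0)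
    (P : ℕ → K) (hP0 : P 0 = 1)
    (hP : ∀ n, P (n + 1) * ((1 + q ^ (2 * n + 1)) * (1 + q ^ (2 * n + 2)))
      = P n * ((1 - q ^ (2 * n + 1)) * (1 - q ^ (2 * n + 2))))
    (a : ℕ → K) (ha : ∀ n, a (n + 1) * (1 - q ^ (2 * (n + 1))) ^ 2 = q ^ (2 * (n + 1))) (N : ℕ) :
    ∑ n ∈ Finset.range N, a (n + 1) * P (n + 1)
      = ∑ n ∈ Finset.range N, a (n + 1)
        + 2 * ∑ r ∈ Finset.range N,
          (-1) ^ (r + 1) * q ^ ((r + 1) ^ 2) * (a (r + 1) * C N (r + 1)) := by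
  induction N with
  | zero => simp
  | succ N ih =>
    rw [Finset.sum_range_succ, ih, Finset.sum_range_succ (fun n => a (n + 1)),
      jacobi q C hC0 hC h1 h2 P hP0 hP (N + 1)]
    have hz := C_zero q C hC h1 N (N + 1) (by omega)
    have e : ∑ r ∈ Finset.range N,
          (-1) ^ (r + 1) * q ^ ((r + 1) ^ 2) * (a (r + 1) * C N (r + 1))
        = ∑ r ∈ Finset.range (N + 1),
          (-1) ^ (r + 1) * q ^ ((r + 1) ^ 2) * (a (r + 1) * C N (r + 1)) := by
      rw [Finset.sum_range_succ, hz]; simp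
    rw [e]
    have e2 : ∀ r ∈ Finset.range (N + 1),
        (-1) ^ (r + 1) * q ^ ((r + 1) ^ 2) * (a (r + 1) * C (N + 1) (r + 1))
        = (-1) ^ (r + 1) * q ^ ((r + 1) ^ 2) * (a (r + 1) * C N (r + 1))
          + a (N + 1) * ((-1) ^ (r + 1) * q ^ ((r + 1) ^ 2) * C (N + 1) (r + 1)) := by
      intro r hr
      have hr' : r ≤ N := by simpa [Nat.lt_succ_iff] using hr
      have cA := C_A q C hC0 hC h1 N (r + 1)
      have a1 := ha r
      have a2 := ha N
      obtain ⟨m, rfl⟩ := Nat.exists_eq_add_of_le hr'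
      rw [show r + m + 1 - (r + 1) = m by omega] at cA
      have d1 := h1 (2 * (r + 1)) (by omega)
      have d2 := h1 (2 * (r + m + 1)) (by omega)
      rw [← eq_div_iff (pow_ne_zero 2 d1)] at a1
      rw [← eq_div_iff (pow_ne_zero 2 d2)] at a2
      rw [← div_eq_iff (pow_ne_zero 2 d2)] at cA
      rw [← cA, a1, a2]
      field_simp
      ring
    rw [Finset.sum_congr rfl e2, Finset.sum_add_distrib, ← Finset.mul_sum]
    ring
end fieldpart
open PowerSeries in
lemma mul_inv_m {k : Type*} [Field k] (i : ℕ) :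
    (1 - (X : k⟦X⟧) ^ (i + 1)) * (1 - (X : k⟦X⟧) ^ (i + 1))⁻¹ = 1 :=
  PowerSeries.mul_inv_cancel _ (by simp)

open PowerSeries in
lemma mul_inv_p {k : Type*} [Field k] (i : ℕ) :
    (1 + (X : k⟦X⟧) ^ (i + 1)) * (1 + (X : k⟦X⟧) ^ (i + 1))⁻¹ = 1 :=
  PowerSeries.mul_inv_cancel _ (by simp)

open PowerSeries in
/-- the ratios of `q`-binomials -/
noncomputable def cc (k : Type*) [Field k] (n : ℕ) : ℕ → k⟦X⟧
  | 0 => 1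
  | r + 1 => cc k n r * (1 - X ^ (2 * (n - r))) * (1 - X ^ (2 * n + 2 * r + 1 + 1))⁻¹

open PowerSeries in
/-- finite product -/
noncomputable def pp (k : Type*) [Field k] (n : ℕ) : k⟦X⟧ :=
  ∏ i ∈ Finset.range (2 * n), ((1 - X ^ (i + 1)) * (1 + X ^ (i + 1))⁻¹)

open PowerSeries in
/-- Lambert term -/
noncomputable def aa (k : Type*) [Field k] (n : ℕ) : k⟦X⟧ :=
  X ^ (2 * n) * ((1 - X ^ (2 * n))⁻¹) ^ 2

open PowerSeries in
/-- truncated generating function -/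
noncomputable def FF (k : Type*) [Field k] (N : ℕ) : k⟦X⟧ :=
  ∑ n ∈ Finset.range N, aa k (n + 1) *
    ∏ i ∈ Finset.Ico (2 * (n + 1)) (2 * N), ((1 + X ^ (i + 1)) * (1 - X ^ (i + 1))⁻¹)

open PowerSeries in
lemma cc_rec (k : Type*) [Field k] (n r : ℕ) :
    cc k n (r + 1) * (1 - X ^ (2 * (n + r + 1))) = cc k n r * (1 - X ^ (2 * (n - r))) := by
  have h := mul_inv_m (k := k) (2 * n + 2 * r + 1)
  rw [cc, show 2 * (n + r + 1) = 2 * n + 2 * r + 1 + 1 by ring]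
  linear_combination (cc k n r * (1 - X ^ (2 * (n - r)))) * h

open PowerSeries in
lemma pp_rec (k : Type*) [Field k] (n : ℕ) :
    pp k (n + 1) * ((1 + X ^ (2 * n + 1)) * (1 + X ^ (2 * n + 2)))
      = pp k n * ((1 - X ^ (2 * n + 1)) * (1 - X ^ (2 * n + 2))) := by
  have h := mul_inv_p (k := k) (2 * n)
  have h' := mul_inv_p (k := k) (2 * n + 1)
  rw [pp, show 2 * (n + 1) = 2 * n + 1 + 1 by ring, Finset.prod_range_succ, Finset.prod_range_succ,
    ← pp]
  calc _ = pp k n * ((1 - X ^ (2 * n + 1)) * (1 - X ^ (2 * n + 2))) *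
      ((1 + X ^ (2 * n + 1)) * (1 + X ^ (2 * n + 1))⁻¹) *
      ((1 + X ^ (2 * n + 1 + 1)) * (1 + X ^ (2 * n + 1 + 1))⁻¹) := by ring
    _ = _ := by rw [h, h']; ring

open PowerSeries in
lemma aa_eq (k : Type*) [Field k] (n : ℕ) :
    aa k (n + 1) * (1 - X ^ (2 * (n + 1))) ^ 2 = X ^ (2 * (n + 1)) := by
  have h := mul_inv_m (k := k) (2 * n + 1)
  rw [aa, show 2 * (n + 1) = 2 * n + 1 + 1 by ring]
  calc _ = (X : k⟦X⟧) ^ (2 * n + 1 + 1) *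
      ((1 - X ^ (2 * n + 1 + 1)) * (1 - X ^ (2 * n + 1 + 1))⁻¹) ^ 2 := by ring
    _ = _ := by rw [h]; ring

open PowerSeries in
lemma map_ne {k : Type*} [Field k] (f : k⟦X⟧) (h : constantCoeff f = 1) :
    algebraMap k⟦X⟧ (FractionRing k⟦X⟧) f ≠ 0 := by
  intro h0
  have := (IsFractionRing.injective k⟦X⟧ (FractionRing k⟦X⟧)) (h0.trans (map_zero _).symm)
  rw [this] at h
  simp at h

open PowerSeries in
lemma jacobiR (k : Type*) [Field k] (n : ℕ) :
    pp k n = 1 + 2 * ∑ r ∈ Finset.range n, (-1) ^ (r + 1) * X ^ ((r + 1) ^ 2) * cc k n (r + 1) := by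
  apply IsFractionRing.injective k⟦X⟧ (FractionRing k⟦X⟧)
  set φ := algebraMap k⟦X⟧ (FractionRing k⟦X⟧)
  rw [jacobi (φ X) (fun n r => φ (cc k n r)) (fun n => by simp [cc]) ?_ ?_ ?_
    (fun n => φ (pp k n)) (by simp [pp]) ?_ n]
  · simp [map_ofNat φ 2]
  · intro n r
    simpa using congrArg φ (cc_rec k n r)
  · intro i hi
    have h := map_ne (k := k) (1 - X ^ i) (by simp; omega)
    rw [map_sub, map_one, map_pow] at h
    exact h
  · intro i hi
    have h := map_ne (k := k) (1 + X ^ i) (by simp; omega)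
    rw [map_add, map_one, map_pow] at h
    exact h
  · intro n
    simpa using congrArg φ (pp_rec k n)

open PowerSeries in
lemma finite_idR (k : Type*) [Field k] (N : ℕ) :
    ∑ n ∈ Finset.range N, aa k (n + 1) * pp k (n + 1)
      = ∑ n ∈ Finset.range N, aa k (n + 1)
        + 2 * ∑ r ∈ Finset.range N,
          (-1) ^ (r + 1) * X ^ ((r + 1) ^ 2) * (aa k (r + 1) * cc k N (r + 1)) := by
  apply IsFractionRing.injective k⟦X⟧ (FractionRing k⟦X⟧)
  set φ := algebraMap k⟦X⟧ (FractionRing k⟦X⟧)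
  have := finite_id (φ X) (fun n r => φ (cc k n r)) (fun n => by simp [cc]) ?_ ?_ ?_
    (fun n => φ (pp k n)) (by simp [pp]) ?_ (fun n => φ (aa k n)) ?_ N
  · simpa [map_ofNat φ 2] using this
  · intro n r
    simpa using congrArg φ (cc_rec k n r)
  · intro i hi
    have h := map_ne (k := k) (1 - X ^ i) (by simp; omega)
    rw [map_sub, map_one, map_pow] at h
    exact h
  · intro i hi
    have h := map_ne (k := k) (1 + X ^ i) (by simp; omega)
    rw [map_add, map_one, map_pow] at h
    exact h
  · intro n
    simpa using congrArg φ (pp_rec k n)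
  · intro n
    simpa using congrArg φ (aa_eq k n)

open PowerSeries in
lemma FF_mul (k : Type*) [Field k] (N : ℕ) :
    FF k N * pp k N = ∑ n ∈ Finset.range N, aa k (n + 1) * pp k (n + 1) := by
  rw [FF, Finset.sum_mul]
  refine Finset.sum_congr rfl fun n hn => ?_
  have hn' : n < N := by simpa using hn
  rw [mul_assoc]
  congr 1
  rw [pp, pp, ← Finset.prod_range_mul_prod_Ico _ (show 2 * (n + 1) ≤ 2 * N by omega), mul_left_comm,
    ← Finset.prod_mul_distrib]
  refine (congrArg _ (Finset.prod_eq_one ?_)).trans (mul_one _)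
  intro i _
  have h := mul_inv_p (k := k) i
  have h' := mul_inv_m (k := k) i
  linear_combination (1 - (X : k⟦X⟧) ^ (i + 1)) * (1 - (X : k⟦X⟧) ^ (i + 1))⁻¹ * h + h'

open PowerSeries in
lemma cc_trunc (k : Type*) [Field k] (n r : ℕ) (hr : r ≤ n) :
    (X : k⟦X⟧) ^ (2 * (n - r)) ∣ cc k n (r + 1) - 1 := by
  have step : ∀ r ≤ n, (X : k⟦X⟧) ^ (2 * (n - r)) ∣ cc k n r - 1 →
      (X : k⟦X⟧) ^ (2 * (n - r)) ∣ cc k n (r + 1) - 1 := by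
    intro r hr h
    have e : cc k n (r + 1) - 1 = cc k n (r + 1) * X ^ (2 * (n + r + 1)) + (cc k n r - 1)
      - cc k n r * X ^ (2 * (n - r)) := by
      linear_combination cc_rec k n r
    rw [e]
    refine dvd_sub (dvd_add ?_ h) (Dvd.intro_left _ rfl)
    exact Dvd.dvd.mul_left (pow_dvd_pow _ (by omega)) _
  induction r with
  | zero => exact step 0 hr (by simp [cc])
  | succ r ih =>
    exact step (r + 1) hr ((pow_dvd_pow _ (by omega)).trans (ih (by omega)))

open PowerSeries in
/-- the theta series, truncated -/
noncomputable def th (k : Type*) [Field k] (N : ℕ) : k⟦X⟧ :=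
  1 + 2 * ∑ r ∈ Finset.range N, (-1) ^ (r + 1) * X ^ ((r + 1) ^ 2)

open PowerSeries in
lemma main_trunc (k : Type*) [Field k] (N : ℕ) :
    (X : k⟦X⟧) ^ (2 * N + 1) ∣ FF k N * th k N - (∑ n ∈ Finset.range N, aa k (n + 1)
        + 2 * ∑ r ∈ Finset.range N, (-1) ^ (r + 1) * X ^ ((r + 1) ^ 2) * aa k (r + 1)) := by
  have d : ∀ r ∈ Finset.range N, ∀ b : k⟦X⟧, (X : k⟦X⟧) ^ (2 * N + 1) ∣
      (-1) ^ (r + 1) * X ^ ((r + 1) ^ 2) * (b * (cc k N (r + 1) - 1)) := by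
    intro r hr b
    have hr' : r < N := by simpa using hr
    obtain ⟨y, hy⟩ := cc_trunc k N r hr'.le
    rw [hy]
    have : (X : k⟦X⟧) ^ (2 * N + 1) ∣ X ^ ((r + 1) ^ 2) * X ^ (2 * (N - r)) := by
      rw [← pow_add]
      apply pow_dvd_pow
      have : (r + 1) ^ 2 = r * r + 2 * r + 1 := by ring
      generalize r * r = s at *
      omega
    obtain ⟨z, hz⟩ := this
    exact ⟨(-1) ^ (r + 1) * b * y * z, by linear_combination ((-1) ^ (r + 1) * b * y) * hz⟩
  have h1 : (X : k⟦X⟧) ^ (2 * N + 1) ∣ pp k N - th k N := by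
    rw [jacobiR, th]
    have : (1 + 2 * ∑ r ∈ Finset.range N, (-1) ^ (r + 1) * X ^ ((r + 1) ^ 2) * cc k N (r + 1))
      - (1 + 2 * ∑ r ∈ Finset.range N, (-1) ^ (r + 1) * (X : k⟦X⟧) ^ ((r + 1) ^ 2))
      = 2 * ∑ r ∈ Finset.range N, (-1) ^ (r + 1) * X ^ ((r + 1) ^ 2)
        * (1 * (cc k N (r + 1) - 1)) := by
      simp only [one_mul, mul_sub, mul_one, Finset.sum_sub_distrib]
      ring
    rw [this]
    exact Dvd.dvd.mul_left (Finset.dvd_sum fun r hr => d r hr 1) _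
  have h2 : (X : k⟦X⟧) ^ (2 * N + 1) ∣ FF k N * pp k N - (∑ n ∈ Finset.range N, aa k (n + 1)
        + 2 * ∑ r ∈ Finset.range N, (-1) ^ (r + 1) * X ^ ((r + 1) ^ 2) * aa k (r + 1)) := by
    rw [FF_mul, finite_idR]
    have : (∑ n ∈ Finset.range N, aa k (n + 1) + 2 * ∑ r ∈ Finset.range N,
          (-1) ^ (r + 1) * X ^ ((r + 1) ^ 2) * (aa k (r + 1) * cc k N (r + 1)))
        - (∑ n ∈ Finset.range N, aa k (n + 1)
        + 2 * ∑ r ∈ Finset.range N, (-1) ^ (r + 1) * X ^ ((r + 1) ^ 2) * aa k (r + 1))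
      = 2 * ∑ r ∈ Finset.range N, (-1) ^ (r + 1) * X ^ ((r + 1) ^ 2)
        * (aa k (r + 1) * (cc k N (r + 1) - 1)) := by
      simp only [mul_sub, mul_one, Finset.sum_sub_distrib]
      ring
    rw [this]
    exact Dvd.dvd.mul_left (Finset.dvd_sum fun r hr => d r hr _) _
  have := dvd_sub h2 (Dvd.dvd.mul_left h1 (FF k N))
  convert this using 1
  ring
open PowerSeries in
lemma aa_trunc (k : Type*) [Field k] (n L : ℕ) :
    (X : k⟦X⟧) ^ (L + 1) ∣ aa k (n + 1)
      - ∑ j ∈ Finset.range L, ((j + 1 : ℕ) : k) • (X : k⟦X⟧) ^ (2 * (n + 1) * (j + 1)) := by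
  have e : ∑ j ∈ Finset.range L, ((j + 1 : ℕ) : k) • (X : k⟦X⟧) ^ (2 * (n + 1) * (j + 1))
      = ∑ j ∈ Finset.range L, ((j : k⟦X⟧) + 1) * ((X : k⟦X⟧) ^ (2 * (n + 1))) ^ (j + 1) := by
    refine Finset.sum_congr rfl fun j _ => ?_
    rw [smul_eq_C_mul, map_natCast, pow_mul]
    push_cast
    ring
  rw [e]
  have ha := aa_eq k n
  have hX : (X : k⟦X⟧) ^ (L + 1) ∣ (X ^ (2 * (n + 1))) ^ (L + 1) := by
    rw [← pow_mul]
    exact pow_dvd_pow _ (by nlinarith)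
  set y := (X : k⟦X⟧) ^ (2 * (n + 1)) with hy
  have s : (1 - y) ^ 2 * ∑ j ∈ Finset.range L, ((j : k⟦X⟧) + 1) * y ^ (j + 1)
      = y - (L + 1) * y ^ (L + 1) + L * y ^ (L + 2) := by
    clear hX e
    induction L with
    | zero => simp
    | succ L ih => rw [Finset.sum_range_succ, mul_add, ih]; push_cast; ring
  have u := mul_inv_m (k := k) (2 * n + 1)
  rw [show 2 * n + 1 + 1 = 2 * (n + 1) by ring, ← hy] at u
  have fin : aa k (n + 1) - ∑ j ∈ Finset.range L, ((j : k⟦X⟧) + 1) * y ^ (j + 1)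
      = y ^ (L + 1) * (((1 - y)⁻¹) ^ 2 * (L + 1 - L * y)) := by
    have hne : (1 - y) ≠ 0 := left_ne_zero_of_mul_eq_one u
    apply mul_left_cancel₀ (pow_ne_zero 2 hne)
    have u2 : ((1 - y) * (1 - y)⁻¹) ^ 2 = 1 := by rw [u, one_pow]
    linear_combination ha - s - (y ^ (L + 1) * (L + 1 - L * y)) * u2
  rw [fin]
  exact Dvd.dvd.mul_right hX _

open PowerSeries in
lemma geom_trunc (k : Type*) [Field k] (i L : ℕ) :
    (X : k⟦X⟧) ^ (L + 1) ∣ (1 + X ^ (i + 1)) * (1 - X ^ (i + 1))⁻¹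
      - (1 + ∑ j ∈ Finset.range L, (2 : k) • (X : k⟦X⟧) ^ ((i + 1) * (j + 1))) := by
  have e : ∑ j ∈ Finset.range L, (2 : k) • (X : k⟦X⟧) ^ ((i + 1) * (j + 1))
      = ∑ j ∈ Finset.range L, 2 * ((X : k⟦X⟧) ^ (i + 1)) ^ (j + 1) := by
    refine Finset.sum_congr rfl fun j _ => ?_
    rw [smul_eq_C_mul, map_ofNat, pow_mul]
  rw [e]
  have hX : (X : k⟦X⟧) ^ (L + 1) ∣ (X ^ (i + 1)) ^ (L + 1) := by
    rw [← pow_mul]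
    exact pow_dvd_pow _ (by nlinarith)
  have u := mul_inv_m (k := k) i
  set y := (X : k⟦X⟧) ^ (i + 1) with hy
  have s : (1 - y) * ∑ j ∈ Finset.range L, 2 * y ^ (j + 1)
      = 2 * y - 2 * y ^ (L + 1) := by
    clear hX e
    induction L with
    | zero => simp
    | succ L ih => rw [Finset.sum_range_succ, mul_add, ih]; ring
  have fin : (1 + y) * (1 - y)⁻¹ - (1 + ∑ j ∈ Finset.range L, 2 * y ^ (j + 1))
      = y ^ (L + 1) * (2 * (1 - y)⁻¹) := by
    have hne : (1 - y) ≠ 0 := left_ne_zero_of_mul_eq_one u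
    apply mul_left_cancel₀ hne
    linear_combination (1 + y - 2 * y ^ (L + 1)) * u - s
  rw [fin]
  exact Dvd.dvd.mul_right hX _

open PowerSeries in
lemma coeff_eq_of_dvd {k : Type*} [Field k] {f g : k⟦X⟧} {L m : ℕ} (h : X ^ L ∣ f - g)
    (hm : m < L) : coeff m f = coeff m g := by
  have := X_pow_dvd_iff.1 h m hm
  rwa [map_sub, sub_eq_zero] at this

open PowerSeries in
lemma coeff_aa (k : Type*) [Field k] (n L m : ℕ) (hm : m ≤ L) :
    coeff m (aa k (n + 1)) = ∑ j ∈ Finset.range L,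
      if 2 * (n + 1) * (j + 1) = m then ((j + 1 : ℕ) : k) else 0 := by
  rw [coeff_eq_of_dvd (aa_trunc k n L) (by omega), map_sum]
  refine Finset.sum_congr rfl fun j _ => ?_
  rw [coeff_smul, coeff_X_pow]
  simp [eq_comm]

open PowerSeries in
lemma coeff_key (k : Type*) [Field k] (N m : ℕ) (hm : m ≤ N) :
    coeff m (FF k N) + 2 * ∑ r ∈ Finset.range N, (-1) ^ (r + 1) *
      (if (r + 1) ^ 2 ≤ m then coeff (m - (r + 1) ^ 2) (FF k N) else 0)
    = ∑ r ∈ Finset.range N, ∑ j ∈ Finset.range N,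
        (if 2 * (r + 1) * (j + 1) = m then ((j + 1 : ℕ) : k) else 0)
      + 2 * ∑ r ∈ Finset.range N, (-1) ^ (r + 1) * ∑ j ∈ Finset.range N,
        (if (r + 1) ^ 2 + 2 * (r + 1) * (j + 1) = m then ((j + 1 : ℕ) : k) else 0) := by
  have h := coeff_eq_of_dvd (main_trunc k N) (show m < 2 * N + 1 by omega)
  have e2 : (2 : k⟦X⟧) = C (2 : k) := (map_ofNat C 2).symm
  have e1 : ∀ r : ℕ, (-1 : k⟦X⟧) ^ r = C ((-1 : k) ^ r) := by intro r; simp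
  rw [th, mul_add, mul_one, map_add, mul_left_comm, map_add, e2, coeff_C_mul, coeff_C_mul,
    Finset.mul_sum, map_sum, map_sum, map_sum] at h
  refine Eq.trans ?_ (h.trans ?_)
  · congr 2
    refine Finset.sum_congr rfl fun r _ => ?_
    rw [mul_left_comm, e1, coeff_C_mul, coeff_mul_X_pow']
  · congr 1
    · exact Finset.sum_congr rfl fun r _ => coeff_aa k r N m hm
    · congr 1
      refine Finset.sum_congr rfl fun r _ => ?_
      rw [mul_assoc, e1, coeff_C_mul, coeff_X_pow_mul']
      congr 1
      split_ifs with h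
      · rw [coeff_aa k r N _ (by omega)]
        refine Finset.sum_congr rfl fun j _ => ?_
        congr 1
        apply propext
        omega
      · symm
        apply Finset.sum_eq_zero
        intro j _
        rw [if_neg]
        omega

lemma sum_Icc_even {A : Type*} [CommRing A] (h : ℤ → A) (he : ∀ M, h (-M) = h M) (N : ℕ) :
    ∑ M ∈ Finset.Icc (-(N : ℤ)) N, h M = h 0 + 2 * ∑ r ∈ Finset.range N, h ((r : ℤ) + 1) := by
  induction N with
  | zero => simp
  | succ N ih =>
    have : Finset.Icc (-((N + 1 : ℕ) : ℤ)) ((N + 1 : ℕ) : ℤ)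
        = insert ((N : ℤ) + 1) (insert (-((N : ℤ) + 1)) (Finset.Icc (-(N : ℤ)) N)) := by
      ext x
      simp only [Finset.mem_Icc, Finset.mem_insert]
      push_cast
      omega
    rw [this, Finset.sum_insert, Finset.sum_insert, ih, he, Finset.sum_range_succ]
    · ring
    · simp
    · simp only [Finset.mem_insert, Finset.mem_Icc]; omega

lemma sum_Icc_one {A : Type*} [CommRing A] (h : ℤ → A) (N : ℕ) :
    ∑ M ∈ Finset.Icc (1 : ℤ) N, h M = ∑ r ∈ Finset.range N, h ((r : ℤ) + 1) := by
  induction N with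
  | zero => simp
  | succ N ih =>
    have : Finset.Icc (1 : ℤ) ((N + 1 : ℕ) : ℤ) = insert ((N : ℤ) + 1) (Finset.Icc (1 : ℤ) N) := by
      ext x
      simp only [Finset.mem_Icc, Finset.mem_insert]
      push_cast
      omega
    rw [this, Finset.sum_insert, ih, Finset.sum_range_succ]
    · ring
    · simp

/-- signed extension to the integers -/
noncomputable def gg (f : ℕ → ZMod 3) (z : ℤ) : ZMod 3 :=
  if 0 < z then (-1) ^ z.toNat * f z.toNat else 0

lemma neg_one_sq_pow (r : ℕ) : (-1 : ZMod 3) ^ (r ^ 2) = (-1) ^ r := by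
  rcases Nat.even_or_odd r with h | h
  · rw [h.neg_one_pow, (h.pow_of_ne_zero two_ne_zero).neg_one_pow]
  · rw [h.neg_one_pow, h.pow.neg_one_pow]

lemma neg_one_mul_self (r : ℕ) : (-1 : ZMod 3) ^ r * (-1) ^ r = 1 := by
  rw [← mul_pow]; simp

open PowerSeries in
lemma H_of (f : ℕ → ZMod 3) (f0 : f 0 = 0)
    (hf : ∀ N m, m ≤ N → coeff m (FF (ZMod 3) N) = f m) (n m : ℤ) (hmn : m ≤ n) :
    ∑ M ∈ Finset.Icc (-n) n, gg f (m - M ^ 2) = tt n m := by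
  rcases le_or_gt m 0 with h0 | h0
  · rw [Finset.sum_eq_zero, tt, Finset.sum_eq_zero]
    · rintro ⟨a, b⟩ h
      simp only [Finset.mem_product, Finset.mem_Icc] at h
      have hab : 1 ≤ a * b := by nlinarith
      rw [if_neg, if_neg]
      · simp
      · nlinarith
      · nlinarith
    · intro M _
      rw [gg, if_neg]
      nlinarith [sq_nonneg M]
  obtain ⟨N, rfl⟩ := Int.eq_ofNat_of_zero_le (show 0 ≤ n by omega)
  obtain ⟨p, rfl⟩ := Int.eq_ofNat_of_zero_le (show 0 ≤ m by omega)
  have hpN : p ≤ N := by exact_mod_cast hmn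
  have hp : 0 < p := by exact_mod_cast h0
  have key := congrArg (fun x => (-1 : ZMod 3) ^ p * x) (coeff_key (ZMod 3) N p hpN)
  rw [sum_Icc_even _ (by intro M; simp), tt, Finset.sum_product, sum_Icc_one]
  simp only [sum_Icc_one, Finset.sum_add_distrib]
  rw [mul_add, mul_add, mul_left_comm ((-1 : ZMod 3) ^ p) 2, mul_left_comm ((-1 : ZMod 3) ^ p) 2,
    Finset.mul_sum _ _ ((-1 : ZMod 3) ^ p), Finset.mul_sum _ _ ((-1 : ZMod 3) ^ p),
    Finset.mul_sum _ _ ((-1 : ZMod 3) ^ p)] at key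
  refine Eq.trans ?_ (key.trans ?_)
  · congr 1
    · rw [gg, if_pos (by simpa using hp), hf N p hpN]; simp
    · congr 1
      refine Finset.sum_congr rfl fun r _ => ?_
      split_ifs with h
      · obtain ⟨t, rfl⟩ := Nat.exists_eq_add_of_le h
        have e1 : (((r + 1) ^ 2 + t : ℕ) : ℤ) - ((r : ℤ) + 1) ^ 2 = (t : ℤ) := by push_cast; ring
        rw [e1, Nat.add_sub_cancel_left, hf N t (by omega), gg, pow_add, neg_one_sq_pow]
        have e2 := neg_one_mul_self (r + 1)
        rcases Nat.eq_zero_or_pos t with ht | ht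
        · subst ht; simp [f0]
        · rw [if_pos (by exact_mod_cast ht), Int.toNat_natCast]
          linear_combination (-(-1) ^ t * f t) * e2
      · rw [gg, if_neg]
        · simp
        · have : ((p : ℕ) : ℤ) < ((r : ℤ) + 1) ^ 2 := by exact_mod_cast (not_le.1 h)
          linarith
  · congr 1
    · refine Finset.sum_congr rfl fun r _ => ?_
      rw [Finset.mul_sum]
      refine Finset.sum_congr rfl fun j _ => ?_
      by_cases h : 2 * (r + 1) * (j + 1) = p
      · have h' : 2 * ((r : ℤ) + 1) * ((j : ℤ) + 1) = p := by exact_mod_cast h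
        rw [if_pos h, if_pos h']
        have : Even p := ⟨(r + 1) * (j + 1), by rw [← h]; ring⟩
        rw [this.neg_one_pow]; push_cast; ring
      · have h' : ¬ 2 * ((r : ℤ) + 1) * ((j : ℤ) + 1) = p := by exact_mod_cast h
        rw [if_neg h, if_neg h', mul_zero]
    · rw [Finset.mul_sum _ _ (2 : ZMod 3)]
      refine Finset.sum_congr rfl fun r _ => ?_
      rw [Finset.mul_sum, Finset.mul_sum, Finset.mul_sum]
      refine Finset.sum_congr rfl fun j _ => ?_
      by_cases h : (r + 1) ^ 2 + 2 * (r + 1) * (j + 1) = p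
      · have h' : ((r : ℤ) + 1) ^ 2 + 2 * ((r : ℤ) + 1) * ((j : ℤ) + 1) = p := by exact_mod_cast h
        rw [if_pos h, if_pos h']
        have e : (-1 : ZMod 3) ^ p = (-1) ^ (r + 1) := by
          rw [← h, pow_add, neg_one_sq_pow, mul_assoc 2, pow_mul]; simp
        rw [e]
        have e2 := neg_one_mul_self (r + 1)
        push_cast
        linear_combination (2 * ((j : ZMod 3) + 1)) * e2
      · have h' : ¬ ((r : ℤ) + 1) ^ 2 + 2 * ((r : ℤ) + 1) * ((j : ℤ) + 1) = p := by
          exact_mod_cast h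
        rw [if_neg h, if_neg h']; ring
/-- weight of a partition -/
noncomputable def pwt {n : ℕ} (p : Nat.Partition n) : ℕ :=
  if Even (smallestPart p) then
    p.parts.count (smallestPart p) * 2 ^ ((p.parts.toFinset.erase (smallestPart p)).card) else 0

lemma spt2bar_eq (n : ℕ) : spt2bar n = ∑ p : Nat.Partition n, pwt p := by
  classical
  unfold spt2bar
  letI inst : ∀ p : Nat.Partition n, Fintype {s : Finset ℕ // s ⊆ p.parts.toFinset} := fun p =>
    Fintype.subtype p.parts.toFinset.powerset (by simp)
  have e : (∑ o : Overpartition n,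
      if Even (smallestPart o.1) ∧ smallestPart o.1 ∉ o.2.1 then
        o.1.parts.count (smallestPart o.1) else 0)
      = ∑ o : (Σ p : Nat.Partition n, {s : Finset ℕ // s ⊆ p.parts.toFinset}),
        if Even (smallestPart o.1) ∧ smallestPart o.1 ∉ o.2.1 then
          o.1.parts.count (smallestPart o.1) else 0 :=
    Fintype.sum_equiv (Equiv.refl _) _ _ (fun _ => rfl)
  rw [e, Fintype.sum_sigma]
  refine Finset.sum_congr rfl fun p _ => ?_
  simp only
  have e2 := Finset.sum_subtype (F := inst p) (p := fun s : Finset ℕ => s ⊆ p.parts.toFinset)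
    p.parts.toFinset.powerset (fun x => Finset.mem_powerset)
    (fun s => if Even (smallestPart p) ∧ smallestPart p ∉ s then
        p.parts.count (smallestPart p) else 0)
  rw [← e2, pwt]
  by_cases h : Even (smallestPart p)
  · simp only [h, true_and, if_true]
    rw [← Finset.sum_filter, Finset.sum_const, ← Finset.card_powerset, smul_eq_mul, mul_comm]
    congr 2
    ext s
    simp only [Finset.mem_filter, Finset.mem_powerset, Finset.subset_erase]
  · simp [h]

/-- weights for generating functions -/
def fw (k : Type*) [Field k] (s N : ℕ) (b : k) (i j : ℕ) : k :=
  if i = s then b * (j : k) else if s < i ∧ i ≤ 2 * N then 2 else 0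

open PowerSeries in
open scoped PowerSeries.WithPiTopology in
lemma tsum_of_trunc {k : Type*} [Field k] [TopologicalSpace k] [T2Space k] (G : k⟦X⟧)
    (w : ℕ → ℕ → k) (i : ℕ)
    (h : ∀ L, X ^ (L + 1) ∣ G -
      ∑ j ∈ Finset.range L, w (i + 1) (j + 1) • (X : k⟦X⟧) ^ ((i + 1) * (j + 1))) :
    ∑' j, w (i + 1) (j + 1) • (X : k⟦X⟧) ^ ((i + 1) * (j + 1)) = G := by
  ext d
  rw [(Nat.Partition.summable_genFun_term w i).map_tsum _ (WithPiTopology.continuous_coeff _ _),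
    coeff_eq_of_dvd (h d) (Nat.lt_succ_self d), map_sum, tsum_eq_sum]
  intro j hj
  rw [coeff_smul, coeff_X_pow, if_neg]
  · simp
  · have : d ≤ j := by simpa using hj
    nlinarith

open PowerSeries in
lemma genFun_fw (k : Type*) [Field k] (n N : ℕ) (hn : n < N) (b : k) :
    Nat.Partition.genFun (fw k (2 * (n + 1)) N b) = (1 + b • aa k (n + 1)) *
      ∏ i ∈ Finset.Ico (2 * (n + 1)) (2 * N), ((1 + X ^ (i + 1)) * (1 - X ^ (i + 1))⁻¹) := by
  letI : TopologicalSpace k := ⊥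
  haveI : DiscreteTopology k := ⟨rfl⟩
  letI := PowerSeries.WithPiTopology.instTopologicalSpace k
  haveI := PowerSeries.WithPiTopology.instT2Space (R := k)
  set s := 2 * (n + 1) with hs
  have hp := Nat.Partition.hasProd_genFun (fw k s N b)
  set T : ℕ → k⟦X⟧ := fun i =>
    1 + ∑' j, fw k s N b (i + 1) (j + 1) • (X : k⟦X⟧) ^ ((i + 1) * (j + 1)) with hT
  have t0 : ∀ i, (i + 1 < s ∨ 2 * N < i + 1) → T i = 1 := by
    intro i hi
    simp only [hT]
    rw [tsum_of_trunc 0, add_zero]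
    intro L
    have : ∀ j, fw k s N b (i + 1) (j + 1) = 0 := by
      intro j
      rw [fw, if_neg (by omega), if_neg (by omega)]
    simp [this]
  have t1 : T (s - 1) = 1 + b • aa k (n + 1) := by
    simp only [hT]
    rw [tsum_of_trunc (b • aa k (n + 1))]
    intro L
    have : ∀ j, fw k s N b (s - 1 + 1) (j + 1) = b * ((j + 1 : ℕ) : k) := by
      intro j
      rw [fw, if_pos (by omega)]
    simp only [this, mul_smul, ← Finset.smul_sum, ← smul_sub]
    rw [show s - 1 + 1 = 2 * (n + 1) by omega, smul_eq_C_mul]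
    exact Dvd.dvd.mul_left (aa_trunc k n L) _
  have t2 : ∀ i ∈ Finset.Ico s (2 * N), T i = (1 + X ^ (i + 1)) * (1 - X ^ (i + 1))⁻¹ := by
    intro i hi
    rw [Finset.mem_Ico] at hi
    simp only [hT]
    rw [tsum_of_trunc ((1 + X ^ (i + 1)) * (1 - X ^ (i + 1))⁻¹ - 1)]
    · ring
    intro L
    have : ∀ j, fw k s N b (i + 1) (j + 1) = 2 := by
      intro j
      rw [fw, if_neg (by omega), if_pos (by omega)]
    simp only [this]
    rw [sub_sub]
    exact geom_trunc k i L
  have h2 : HasProd T (∏ i ∈ Finset.range (2 * N), T i) := by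
    apply hasProd_prod_of_ne_finset_one
    intro i hi
    apply t0
    right
    simp at hi; omega
  rw [hp.unique h2, ← Finset.prod_range_mul_prod_Ico _ (show s ≤ 2 * N by omega),
    Finset.prod_congr rfl t2]
  congr 1
  rw [show s = (s - 1) + 1 by omega, Finset.prod_range_succ, t1, Finset.prod_eq_one, one_mul]
  intro i hi
  apply t0
  left
  simp at hi; omega

lemma smallest_mem {m : ℕ} (hm : 1 ≤ m) (p : Nat.Partition m) : smallestPart p ∈ p.parts := by
  have : {x | x ∈ p.parts}.Nonempty := by
    by_contra h
    have h0 : p.parts = 0 := by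
      rw [Multiset.eq_zero_iff_forall_notMem]
      intro a ha
      exact h ⟨a, ha⟩
    have := p.parts_sum
    rw [h0] at this
    simp at this
    omega
  exact Nat.sInf_mem this

lemma smallest_le {m : ℕ} (p : Nat.Partition m) (x : ℕ) (hx : x ∈ p.parts) :
    smallestPart p ≤ x := Nat.sInf_le hx

lemma term_fw (k : Type*) [Field k] {m : ℕ} (hm : 1 ≤ m) (p : Nat.Partition m) (s N : ℕ)
    (hN : m ≤ N) :
    p.parts.toFinsupp.prod (fw k s N 1) - p.parts.toFinsupp.prod (fw k s N 0)
      = if s = smallestPart p then ((p.parts.count (smallestPart p) *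
        2 ^ ((p.parts.toFinset.erase (smallestPart p)).card) : ℕ) : k) else 0 := by
  classical
  simp_rw [Finsupp.prod, Multiset.toFinsupp_support, Multiset.toFinsupp_apply]
  have hmem := smallest_mem hm p
  have hmem' : smallestPart p ∈ p.parts.toFinset := by simpa using hmem
  split_ifs with h
  · have z : ∏ i ∈ p.parts.toFinset, fw k s N 0 i (p.parts.count i) = 0 := by
      apply Finset.prod_eq_zero hmem'
      rw [fw, if_pos h.symm, zero_mul]
    rw [z, sub_zero, ← Finset.mul_prod_erase _ _ hmem']
    push_cast
    congr 1
    · rw [fw, if_pos h.symm, one_mul]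
    · rw [Finset.prod_congr rfl (g := fun _ => (2 : k)), Finset.prod_const]
      intro i hi
      rw [Finset.mem_erase, Multiset.mem_toFinset] at hi
      have h1 := smallest_le p i hi.2
      have h2 : i ≤ m := by
        rw [← p.parts_sum]
        exact Multiset.le_sum_of_mem hi.2
      have h3 := hi.1
      rw [fw, if_neg (by omega), if_pos (by omega)]
  · by_cases hs : s ∈ p.parts
    · have h1 := smallest_le p s hs
      have z : ∀ b : k, ∏ i ∈ p.parts.toFinset, fw k s N b i (p.parts.count i) = 0 := by
        intro b
        apply Finset.prod_eq_zero hmem'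
        rw [fw, if_neg (by omega), if_neg (by omega)]
      rw [z, z, sub_zero]
    · rw [sub_eq_zero]
      refine Finset.prod_congr rfl fun i hi => ?_
      have : i ≠ s := by
        rintro rfl
        exact hs (by simpa using hi)
      rw [fw, fw, if_neg this, if_neg this]

open PowerSeries in
lemma coeff_FF (k : Type*) [Field k] (N m : ℕ) (hm : 1 ≤ m) (hN : m ≤ N) :
    coeff m (FF k N) = (spt2bar m : k) := by
  have e : FF k N = ∑ n ∈ Finset.range N, (Nat.Partition.genFun (fw k (2 * (n + 1)) N 1)
      - Nat.Partition.genFun (fw k (2 * (n + 1)) N 0)) := by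
    rw [FF]
    refine Finset.sum_congr rfl fun n hn => ?_
    have hn' : n < N := by simpa using hn
    rw [genFun_fw k n N hn', genFun_fw k n N hn', one_smul, zero_smul]
    ring
  rw [e, map_sum]
  simp only [map_sub, Nat.Partition.coeff_genFun, ← Finset.sum_sub_distrib]
  rw [Finset.sum_comm, spt2bar_eq, Nat.cast_sum]
  refine Finset.sum_congr rfl fun p _ => ?_
  simp only [term_fw k hm p _ N hN]
  rw [pwt]
  have hmem := smallest_mem hm p
  have hpos := p.parts_pos hmem
  have hle : smallestPart p ≤ m := by
    conv_rhs => rw [← p.parts_sum]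
    exact Multiset.le_sum_of_mem hmem
  split_ifs with h
  · obtain ⟨t, ht⟩ := h
    rw [Finset.sum_eq_single (t - 1)]
    · rw [if_pos (by omega)]
    · intro b _ hb
      rw [if_neg (by omega)]
    · intro hb
      exfalso
      apply hb
      simp
      omega
  · rw [Nat.cast_zero]
    apply Finset.sum_eq_zero
    intro b _
    rw [if_neg]
    intro hb
    exact h ⟨b + 1, by omega⟩

end Spt2

theorem spt2bar_three_mul_div_three (n : ℕ) (hn : 1 ≤ n) : 3 ∣ spt2bar (3 * n) := by
  set f : ℕ → ZMod 3 := fun m => if m = 0 then 0 else (spt2bar m : ZMod 3) with hf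
  have hc : ∀ N m, m ≤ N → PowerSeries.coeff m (Spt2.FF (ZMod 3) N) = f m := by
    intro N m hm
    rcases Nat.eq_zero_or_pos m with h | h
    · subst h
      simp [hf, Spt2.FF, Spt2.aa]
    · rw [Spt2.coeff_FF _ N m h hm]
      simp [hf, h.ne']
  have h := Spt2.stepC (Spt2.gg f) (fun m hm => by rw [Spt2.gg, if_neg (by omega)])
    (fun a b hab => Spt2.H_of f (by simp [hf]) hc a b hab) (3 * n)
    (Or.inl (by push_cast; rw [show (3 : ZMod 3) = 0 from rfl, zero_mul]))
  rw [Spt2.gg, if_pos (by exact_mod_cast (by omega : 0 < 3 * n)), Int.toNat_natCast] at h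
  have h2 : f (3 * n) = 0 := by
    rcases mul_eq_zero.1 h with h | h
    · exact absurd h (pow_ne_zero _ (by decide))
    · exact h
  simp only [hf] at h2
  rw [if_neg (by omega)] at h2
  exact (ZMod.natCast_eq_zero_iff _ _).1 h2
end

section
/- For all n ≥ 0, the total number of occurrences of the smallest part among overpartitions of 3n+1 whose smallest part is even and not overlined is divisible by 3. -/
section ntpart


/-- triples `(x,u,v)` with `u,v>0`, `x^2+2uv=N` -/
noncomputable def setA (N : ℤ) : Finset (ℤ × ℤ × ℤ) :=
  (Finset.Icc (-N) N ×ˢ Finset.Icc (-N) N ×ˢ Finset.Icc (-N) N).filter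
    fun t => 0 < t.2.1 ∧ 0 < t.2.2 ∧ t.1 ^ 2 + 2 * t.2.1 * t.2.2 = N

/-- triples `(x,a,m)` with `|m|<a`, `x^2+a^2-m^2=N` -/
noncomputable def setQ (N : ℤ) : Finset (ℤ × ℤ × ℤ) :=
  (Finset.Icc (-N) N ×ˢ Finset.Icc (-N) N ×ˢ Finset.Icc (-N) N).filter
    fun t => -t.2.1 < t.2.2 ∧ t.2.2 < t.2.1 ∧ t.1 ^ 2 + t.2.1 ^ 2 - t.2.2 ^ 2 = N

lemma mem_setA {N x u v : ℤ} :
    (x, u, v) ∈ setA N ↔ 0 < u ∧ 0 < v ∧ x ^ 2 + 2 * u * v = N := by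
  simp only [setA, Finset.mem_filter, Finset.mem_product, Finset.mem_Icc, and_iff_right_iff_imp]
  rintro ⟨hu, hv, h⟩
  have h1 : 0 < u * v := mul_pos hu hv
  have h2 : u ≤ u * v := by nlinarith
  have h3 : v ≤ u * v := by nlinarith
  refine ⟨⟨?_, ?_⟩, ⟨?_, ?_⟩, ?_, ?_⟩ <;> nlinarith [sq_nonneg x, sq_nonneg (x-1), sq_nonneg (x+1)]

lemma mem_setQ {N x a m : ℤ} :
    (x, a, m) ∈ setQ N ↔ -a < m ∧ m < a ∧ x ^ 2 + a ^ 2 - m ^ 2 = N := by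
  simp only [setQ, Finset.mem_filter, Finset.mem_product, Finset.mem_Icc, and_iff_right_iff_imp]
  rintro ⟨hu, hv, h⟩
  have h1 : 0 < (a - m) * (a + m) := mul_pos (by linarith) (by linarith)
  have h2 : (a - m) ≤ (a - m) * (a + m) := by nlinarith
  have h3 : (a + m) ≤ (a - m) * (a + m) := by nlinarith
  have h4 : x ≤ x ^ 2 := by nlinarith [Int.le_self_sq x]
  have h5 : -x ≤ x ^ 2 := by nlinarith [Int.le_self_sq (-x)]
  have h6 : x ^ 2 + (a - m) * (a + m) = N := by rw [← h]; ring
  have h7 := sq_nonneg x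
  refine ⟨⟨?_, ?_⟩, ⟨?_, ?_⟩, ?_, ?_⟩ <;> linarith

abbrev Z3 := ZMod 3

lemma z3_two_zero {z : Z3} (h : z = -z) : z = 0 := by
  revert z; decide

def fa (x u : Z3) : Z3 := if x = 0 then u else 0
def fb (x u : Z3) : Z3 := if x ≠ 0 ∧ x = u then u else 0
def fc (x u : Z3) : Z3 := if x ≠ 0 ∧ x = -u then u else 0

/-- the weight `1` if `3 ∣ x`, `-1` otherwise -/
def wt (x : Z3) : Z3 := if x = 0 then 1 else -1

lemma castN {N : ℤ} (hN : (3:ℤ) ∣ N) : ((N : ℤ) : Z3) = 0 :=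
  (ZMod.intCast_zmod_eq_zero_iff_dvd N 3).2 hN

lemma castA {N x u v : ℤ} (hN : (3:ℤ) ∣ N) (h : x ^ 2 + 2 * u * v = N) :
    (x : Z3) ^ 2 + 2 * u * v = 0 := by
  have := congrArg (Int.cast : ℤ → Z3) h
  rw [castN hN] at this
  exact_mod_cast this

lemma castQ {N x u v : ℤ} (hN : (3:ℤ) ∣ N) (h : x ^ 2 + u ^ 2 - v ^ 2 = N) :
    (x : Z3) ^ 2 + u ^ 2 - v ^ 2 = 0 := by
  have := congrArg (Int.cast : ℤ → Z3) h
  rw [castN hN] at this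
  exact_mod_cast this

open Finset

/-- Step (ii) -/
lemma stepV {N : ℤ} :
    ∑ t ∈ (setQ N).filter (fun t => 0 < t.2.2 ∧ t.2.2 < |t.1|),
      (t.2.2 : Z3) * ((t.2.1 : Z3) ^ 2 - (t.1 : Z3) ^ 2) = 0 := by
  refine Finset.sum_involution
    (fun t _ => ((if 0 < t.1 then t.2.1 else -t.2.1), |t.1|, t.2.2)) ?_ ?_ ?_ ?_
  · rintro ⟨x, a, m⟩ h
    simp only [mem_filter, mem_setQ] at h
    obtain hx | hx := le_total 0 x
    · simp only [abs_of_nonneg hx]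
      split_ifs <;> push_cast <;> ring
    · simp only [abs_of_nonpos hx]
      split_ifs <;> push_cast <;> ring
  · rintro ⟨x, a, m⟩ h h0 h1
    apply h0
    simp only [Prod.mk.injEq] at h1
    have : a = |x| := h1.2.1.symm
    have h2 : a ^ 2 = x ^ 2 := by rw [this, sq_abs]
    have h3 : (a : Z3) ^ 2 = (x : Z3) ^ 2 := by exact_mod_cast congrArg (Int.cast : ℤ → Z3) h2
    simp [h3]
  · rintro ⟨x, a, m⟩ h
    simp only [mem_filter, mem_setQ] at h ⊢
    obtain ⟨⟨h1, h2, h3⟩, h4, h5⟩ := h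
    have : |if 0 < x then a else -a| = a := by
      split_ifs
      · exact abs_of_pos (by linarith)
      · rw [abs_neg]; exact abs_of_pos (by linarith)
    have e : (if 0 < x then a else -a) ^ 2 = a ^ 2 := by split_ifs <;> ring
    rw [this, e, sq_abs]
    refine ⟨⟨by linarith, by linarith, by linarith⟩, h4, h2⟩
  · rintro ⟨x, a, m⟩ h
    simp only [mem_filter, mem_setQ] at h ⊢
    obtain ⟨⟨h1, h2, h3⟩, h4, h5⟩ := h
    have ha : 0 < a := by linarith
    have hx : x ≠ 0 := by rintro rfl; simp at h5; linarith
    obtain hx | hx := lt_or_gt_of_ne hx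
    · simp [not_lt.2 hx.le, abs_of_neg hx, abs_of_pos ha, ha.le]
    · simp [hx, abs_of_pos hx, abs_of_pos ha, ha]

/-- Step (iii) -/
lemma stepL {N : ℤ} (hN : (3:ℤ) ∣ N) :
    ∑ t ∈ (setQ N).filter (fun t => |t.1| ≤ t.2.2),
      (t.2.2 : Z3) * ((t.2.1 : Z3) ^ 2 - (t.1 : Z3) ^ 2) =
    ∑ t ∈ (setA N).filter (fun t => 0 ≤ t.2.1 + 2 * t.1 - 2 * t.2.2),
      (fa t.1 t.2.1 + fb t.1 t.2.1 - fc t.1 t.2.1) := by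
  have h0 : ∑ t ∈ (setQ N).filter (fun t => |t.1| ≤ t.2.2),
      (t.1 : Z3) * ((t.2.1 : Z3) ^ 2 - (t.1 : Z3) ^ 2) = 0 := by
    refine Finset.sum_involution (fun t _ => (-t.1, t.2.1, t.2.2)) ?_ ?_ ?_ ?_
    · rintro ⟨x, a, m⟩ h
      push_cast; ring
    · rintro ⟨x, a, m⟩ h h0 h1
      apply h0
      simp only [Prod.mk.injEq] at h1
      have : x = 0 := by omega
      simp [this]
    · rintro ⟨x, a, m⟩ h
      simpa [mem_setQ] using h
    · rintro ⟨x, a, m⟩ h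
      simp
  have h1 : ∑ t ∈ (setQ N).filter (fun t => |t.1| ≤ t.2.2),
      (t.2.2 : Z3) * ((t.2.1 : Z3) ^ 2 - (t.1 : Z3) ^ 2) =
      ∑ t ∈ (setQ N).filter (fun t => |t.1| ≤ t.2.2),
      ((t.2.2 : Z3) - t.1) * ((t.2.1 : Z3) ^ 2 - (t.1 : Z3) ^ 2) := by
    simp only [sub_mul _ _ (_ - _), Finset.sum_sub_distrib, h0, sub_zero]
  rw [h1]
  have h2 : ∑ t ∈ (setQ N).filter (fun t => |t.1| ≤ t.2.2),
      ((t.2.2 : Z3) - t.1) * ((t.2.1 : Z3) ^ 2 - (t.1 : Z3) ^ 2) =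
      ∑ t ∈ (setQ N).filter (fun t => |t.1| ≤ t.2.2 ∧ t.1 < t.2.2),
      ((t.2.2 : Z3) - t.1) * ((t.2.1 : Z3) ^ 2 - (t.1 : Z3) ^ 2) := by
    symm
    apply Finset.sum_subset
    · intro t ht
      simp only [mem_filter] at ht ⊢
      exact ⟨ht.1, ht.2.1⟩
    · rintro ⟨x, a, m⟩ h h'
      simp only [mem_filter] at h h'
      have : x = m := by
        have := le_of_abs_le h.2
        by_contra hne
        exact h' ⟨h.1, h.2, lt_of_le_of_ne this hne⟩
      simp [this]
  rw [h2]
  refine Finset.sum_nbij' (fun t => (t.2.1 - t.2.2 + t.1, t.2.2 - t.1, t.2.1 - t.2.2))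
    (fun t => (t.1 - t.2.2, t.2.1 + t.1, t.2.1 + t.1 - t.2.2)) ?_ ?_ ?_ ?_ ?_
  · rintro ⟨x, a, m⟩ h
    simp only [mem_filter, mem_setQ, mem_setA, abs_le] at h ⊢
    refine ⟨⟨by linarith, by linarith, ?_⟩, by linarith⟩
    rw [← h.1.2.2]; ring
  · rintro ⟨x, u, v⟩ h
    simp only [mem_filter, mem_setQ, mem_setA, abs_le] at h ⊢
    refine ⟨⟨by linarith, by linarith, ?_⟩, ⟨by linarith, by linarith⟩, by linarith⟩
    rw [← h.1.2.2]; ring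
  · rintro ⟨x, a, m⟩ h
    simp only [Prod.mk.injEq]; refine ⟨?_, ?_, ?_⟩ <;> ring
  · rintro ⟨x, a, m⟩ h
    simp only [Prod.mk.injEq]; refine ⟨?_, ?_, ?_⟩ <;> ring
  · rintro ⟨x, a, m⟩ h
    simp only [mem_filter, mem_setQ] at h
    have := castQ hN h.1.2.2
    push_cast
    revert this
    generalize (x : Z3) = x
    generalize (a : Z3) = a
    generalize (m : Z3) = m
    revert x a m
    decide

lemma stepPJ {N : ℤ} (hN : (3:ℤ) ∣ N) :
    ∑ t ∈ (setA N).filter (fun t => 0 ≤ t.2.1 + 2 * t.1 - 2 * t.2.2), fb t.1 t.2.1 =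
    ∑ t ∈ (setA N).filter (fun t => 2 * t.1 + 2 * t.2.1 < t.2.2), fc t.1 t.2.1 := by
  have h2 : ∑ t ∈ (setA N).filter (fun t => 0 ≤ t.2.1 + 2 * t.1 - 2 * t.2.2), fb t.1 t.2.1 =
      ∑ t ∈ (setA N).filter (fun t => 0 < t.2.1 + 2 * t.1 - 2 * t.2.2), fb t.1 t.2.1 := by
    symm
    apply Finset.sum_subset
    · intro t ht
      simp only [mem_filter] at ht ⊢
      exact ⟨ht.1, ht.2.le⟩
    · rintro ⟨x, u, v⟩ h h'
      simp only [mem_filter, mem_setA] at h h'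
      have e : u + 2 * x - 2 * v = 0 := by
        by_contra hne
        exact h' ⟨h.1, lt_of_le_of_ne h.2 (Ne.symm hne)⟩
      have e' : (u : Z3) + 2 * x - 2 * v = 0 := by exact_mod_cast congrArg (Int.cast : ℤ → Z3) e
      have := castA hN h.1.2.2
      revert this e'
      generalize (x : Z3) = x
      generalize (u : Z3) = a
      generalize (v : Z3) = m
      revert x a m
      decide
  rw [h2]
  refine Finset.sum_nbij' (fun t => (-t.1, t.2.2, t.2.1)) (fun t => (-t.1, t.2.2, t.2.1))
    ?_ ?_ ?_ ?_ ?_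
  · rintro ⟨x, u, v⟩ h
    simp only [mem_filter, mem_setA] at h ⊢
    refine ⟨⟨by linarith, by linarith, ?_⟩, by linarith⟩
    rw [← h.1.2.2]; ring
  · rintro ⟨x, u, v⟩ h
    simp only [mem_filter, mem_setA] at h ⊢
    refine ⟨⟨by linarith, by linarith, ?_⟩, by linarith⟩
    rw [← h.1.2.2]; ring
  · rintro ⟨x, u, v⟩ h
    simp
  · rintro ⟨x, u, v⟩ h
    simp
  · rintro ⟨x, u, v⟩ h
    simp only [mem_filter, mem_setA] at h
    have := castA hN h.1.2.2
    push_cast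
    revert this
    generalize (x : Z3) = x
    generalize (u : Z3) = a
    generalize (v : Z3) = m
    revert x a m
    decide

lemma stepJ {N : ℤ} :
    ∑ t ∈ (setA N).filter (fun t => 2 * t.1 + 2 * t.2.1 < t.2.2), fa t.1 t.2.1 =
    ∑ t ∈ (setA N).filter (fun t => 2 * t.1 + 2 * t.2.1 < t.2.2), fb t.1 t.2.1 := by
  refine Finset.sum_nbij' (fun t => (-2 * t.2.1 - t.1, t.2.1, t.2.2 - 2 * t.1 - 2 * t.2.1))
    (fun t => (-2 * t.2.1 - t.1, t.2.1, t.2.2 - 2 * t.1 - 2 * t.2.1))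
    ?_ ?_ ?_ ?_ ?_
  · rintro ⟨x, u, v⟩ h
    simp only [mem_filter, mem_setA] at h ⊢
    refine ⟨⟨by linarith, by linarith, ?_⟩, by linarith⟩
    rw [← h.1.2.2]; ring
  · rintro ⟨x, u, v⟩ h
    simp only [mem_filter, mem_setA] at h ⊢
    refine ⟨⟨by linarith, by linarith, ?_⟩, by linarith⟩
    rw [← h.1.2.2]; ring
  · rintro ⟨x, u, v⟩ h
    simp only [Prod.mk.injEq]; refine ⟨by ring, trivial, by ring⟩
  · rintro ⟨x, u, v⟩ h
    simp only [Prod.mk.injEq]; refine ⟨by ring, trivial, by ring⟩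
  · rintro ⟨x, u, v⟩ h
    push_cast
    generalize (x : Z3) = x
    generalize (u : Z3) = a
    revert x a
    decide

/-- the function `fa-fb-fc` in the coordinates `(y,a,m)` -/
def fF (y a m : Z3) : Z3 :=
  fa (y - a + m) (a - m) - fb (y - a + m) (a - m) - fc (y - a + m) (a - m)

lemma stepK {N : ℤ} :
    ∑ t ∈ (setA N).filter (fun t => t.2.1 + 2 * t.1 - 2 * t.2.2 < 0 ∧ t.2.2 ≤ 2 * t.1 + 2 * t.2.1),
      (fa t.1 t.2.1 - fb t.1 t.2.1 - fc t.1 t.2.1) =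
    ∑ t ∈ (setQ N).filter (fun t => -t.1 < t.2.2 ∧ t.2.2 ≤ t.1), fF t.1 t.2.1 t.2.2 := by
  refine Finset.sum_nbij' (fun t => (t.1 + t.2.1, t.2.2 - t.1, t.2.2 - t.2.1 - t.1))
    (fun t => (t.1 - t.2.1 + t.2.2, t.2.1 - t.2.2, t.1 + t.2.2)) ?_ ?_ ?_ ?_ ?_
  · rintro ⟨x, u, v⟩ h
    simp only [mem_filter, mem_setA, mem_setQ] at h ⊢
    refine ⟨⟨by linarith, by linarith, ?_⟩, by linarith, by linarith⟩
    rw [← h.1.2.2]; ring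
  · rintro ⟨x, u, v⟩ h
    simp only [mem_filter, mem_setA, mem_setQ] at h ⊢
    refine ⟨⟨by linarith, by linarith, ?_⟩, by linarith, by linarith⟩
    rw [← h.1.2.2]; ring
  · rintro ⟨x, u, v⟩ h
    simp only [Prod.mk.injEq]; refine ⟨?_, ?_, ?_⟩ <;> ring
  · rintro ⟨x, u, v⟩ h
    simp only [Prod.mk.injEq]; refine ⟨?_, ?_, ?_⟩ <;> ring
  · rintro ⟨x, u, v⟩ h
    have e1 : ((x + u : ℤ) : Z3) - ((v - x : ℤ) : Z3) + ((v - u - x : ℤ) : Z3) = x := by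
      push_cast; ring
    have e2 : ((v - x : ℤ) : Z3) - ((v - u - x : ℤ) : Z3) = u := by
      push_cast; ring
    simp only [fF, e1, e2]

lemma stepK0 {N : ℤ} (hN : (3:ℤ) ∣ N) :
    ∑ t ∈ (setQ N).filter (fun t => -t.1 < t.2.2 ∧ t.2.2 = t.1), fF t.1 t.2.1 t.2.2 = 0 := by
  refine Finset.sum_involution (fun t _ => (t.2.1 - t.1, t.2.1, t.2.1 - t.1)) ?_ ?_ ?_ ?_
  · rintro ⟨x, a, m⟩ h
    simp only [mem_filter, mem_setQ] at h
    obtain ⟨⟨h1, h2, h3⟩, h4, rfl⟩ := h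
    have := castQ hN h3
    push_cast
    revert this
    generalize (m : Z3) = x
    generalize (a : Z3) = a
    revert x a
    decide
  · rintro ⟨x, a, m⟩ h h0 h1
    apply h0
    simp only [mem_filter, mem_setQ] at h
    obtain ⟨⟨h1, h2, h3⟩, h4, rfl⟩ := h
    simp only [Prod.mk.injEq] at h1
    have e : a = 2 * m := by omega
    have := castQ hN h3
    subst e
    push_cast at this ⊢
    revert this
    generalize (m : Z3) = x
    revert x
    decide
  · rintro ⟨x, a, m⟩ h
    simp only [mem_filter, mem_setQ] at h ⊢
    obtain ⟨⟨h1, h2, h3⟩, h4, rfl⟩ := h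
    refine ⟨⟨by linarith, by linarith, by linarith⟩, by linarith, trivial⟩
  · rintro ⟨x, a, m⟩ h
    simp only [mem_filter, mem_setQ] at h ⊢
    obtain ⟨⟨h1, h2, h3⟩, h4, rfl⟩ := h
    simp

lemma stepK1 {N : ℤ} (hN : (3:ℤ) ∣ N) :
    ∑ t ∈ (setQ N).filter (fun t => -t.1 < t.2.2 ∧ t.2.2 < t.1), fF t.1 t.2.1 t.2.2 = 0 := by
  have h1 : ∑ t ∈ (setQ N).filter (fun t => -t.1 < t.2.2 ∧ t.2.2 < t.1), fF t.1 t.2.1 t.2.2 =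
      ∑ t ∈ (setQ N).filter (fun t => -t.1 < t.2.2 ∧ t.2.2 < t.1), fF t.1 t.2.1 (-t.2.2) := by
    refine Finset.sum_nbij' (fun t => (t.1, t.2.1, -t.2.2)) (fun t => (t.1, t.2.1, -t.2.2))
      ?_ ?_ ?_ ?_ ?_
    · rintro ⟨x, a, m⟩ h
      simp only [mem_filter, mem_setQ] at h ⊢
      refine ⟨⟨by linarith, by linarith, ?_⟩, by linarith, by linarith⟩
      rw [← h.1.2.2]; ring
    · rintro ⟨x, a, m⟩ h
      simp only [mem_filter, mem_setQ] at h ⊢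
      refine ⟨⟨by linarith, by linarith, ?_⟩, by linarith, by linarith⟩
      rw [← h.1.2.2]; ring
    · rintro ⟨x, u, v⟩ h
      simp
    · rintro ⟨x, u, v⟩ h
      simp
    · rintro ⟨x, u, v⟩ h
      simp
  have h2 : ∑ t ∈ (setQ N).filter (fun t => -t.1 < t.2.2 ∧ t.2.2 < t.1),
      ((t.2.1 : Z3) - t.1) = 0 := by
    refine Finset.sum_involution (fun t _ => (t.2.1, t.1, t.2.2)) ?_ ?_ ?_ ?_
    · rintro ⟨x, a, m⟩ h
      ring
    · rintro ⟨x, a, m⟩ h h0 h1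
      apply h0
      simp only [Prod.mk.injEq] at h1
      simp [h1.1]
    · rintro ⟨x, a, m⟩ h
      simp only [mem_filter, mem_setQ] at h ⊢
      refine ⟨⟨by linarith, by linarith, by linarith⟩, by linarith, by linarith⟩
    · rintro ⟨x, a, m⟩ h
      rfl
  apply z3_two_zero
  rw [eq_neg_iff_add_eq_zero]
  nth_rw 2 [h1]
  rw [← Finset.sum_add_distrib, ← h2]
  apply Finset.sum_congr rfl
  rintro ⟨x, a, m⟩ h
  simp only [mem_filter, mem_setQ] at h
  have := castQ hN h.1.2.2
  revert this
  generalize (x : Z3) = x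
  generalize (a : Z3) = a
  generalize (m : Z3) = m
  revert x a m
  decide

theorem nt_main {N : ℤ} (hN : (3:ℤ) ∣ N) :
    ∑ t ∈ (setA N), wt t.1 * t.2.1 +
    2 * ∑ t ∈ (setQ N).filter (fun t => 0 < t.2.2), wt t.1 * t.2.2 = 0 := by
  -- first the sum over `setQ`
  have hQ : ∑ t ∈ (setQ N).filter (fun t => 0 < t.2.2), wt t.1 * (t.2.2 : Z3) =
      ∑ t ∈ (setA N).filter (fun t => 0 ≤ t.2.1 + 2 * t.1 - 2 * t.2.2),
      (fa t.1 t.2.1 + fb t.1 t.2.1 - fc t.1 t.2.1) := by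
    rw [← stepL hN]
    have e1 : ∑ t ∈ (setQ N).filter (fun t => 0 < t.2.2), wt t.1 * (t.2.2 : Z3) =
        ∑ t ∈ (setQ N).filter (fun t => 0 < t.2.2),
          (t.2.2 : Z3) * ((t.2.1 : Z3) ^ 2 - (t.1 : Z3) ^ 2) := by
      apply Finset.sum_congr rfl
      rintro ⟨x, a, m⟩ h
      simp only [mem_filter, mem_setQ] at h
      have := castQ hN h.1.2.2
      revert this
      generalize (x : Z3) = x
      generalize (a : Z3) = a
      generalize (m : Z3) = m
      revert x a m
      decide
    rw [e1, ← Finset.sum_filter_add_sum_filter_not _ (fun t => t.2.2 < |t.1|), filter_filter,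
      filter_filter, stepV, zero_add]
    apply Finset.sum_subset
    · rintro ⟨x, a, m⟩ h
      simp only [mem_filter, not_lt] at h ⊢
      exact ⟨h.1, h.2.2⟩
    · rintro ⟨x, a, m⟩ h h'
      simp only [mem_filter, not_lt] at h h'
      have : m = 0 := by
        by_contra hne
        have := abs_nonneg x
        exact h' ⟨h.1, lt_of_le_of_ne (by linarith) (Ne.symm hne), h.2⟩
      simp [this]
  have hR : ∑ t ∈ (setA N), wt t.1 * (t.2.1 : Z3) =
      ∑ t ∈ (setA N), (fa t.1 t.2.1 - fb t.1 t.2.1 - fc t.1 t.2.1) := by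
    apply Finset.sum_congr rfl
    rintro ⟨x, a, m⟩ h
    simp only [mem_setA] at h
    have := castA hN h.2.2
    revert this
    generalize (x : Z3) = x
    generalize (a : Z3) = a
    generalize (m : Z3) = m
    revert x a m
    decide
  have hK : ∑ t ∈ (setA N).filter
      (fun t => t.2.1 + 2 * t.1 - 2 * t.2.2 < 0 ∧ t.2.2 ≤ 2 * t.1 + 2 * t.2.1),
      (fa t.1 t.2.1 - fb t.1 t.2.1 - fc t.1 t.2.1) = 0 := by
    rw [stepK, ← Finset.sum_filter_add_sum_filter_not _ (fun t => t.2.2 = t.1), filter_filter,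
      filter_filter]
    rw [Finset.filter_congr (q := fun t => -t.1 < t.2.2 ∧ t.2.2 = t.1) (by
      rintro ⟨x, a, m⟩ h; simp only; omega), stepK0 hN]
    rw [Finset.filter_congr (q := fun t => -t.1 < t.2.2 ∧ t.2.2 < t.1) (by
      rintro ⟨x, a, m⟩ h; simp only; omega), stepK1 hN, add_zero]
  have hH : ∑ t ∈ (setA N).filter (fun t => ¬ 0 ≤ t.2.1 + 2 * t.1 - 2 * t.2.2),
      (fa t.1 t.2.1 - fb t.1 t.2.1 - fc t.1 t.2.1) =
      ∑ t ∈ (setA N).filter (fun t => 2 * t.1 + 2 * t.2.1 < t.2.2),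
      (fa t.1 t.2.1 - fb t.1 t.2.1 - fc t.1 t.2.1) := by
    rw [← Finset.sum_filter_add_sum_filter_not _ (fun t => 2 * t.1 + 2 * t.2.1 < t.2.2),
      filter_filter, filter_filter]
    rw [Finset.filter_congr (q := fun t => 2 * t.1 + 2 * t.2.1 < t.2.2) (by
      rintro ⟨x, u, v⟩ h; simp only [mem_setA] at h ⊢; omega)]
    rw [Finset.filter_congr
      (p := fun t : ℤ × ℤ × ℤ => ¬ 0 ≤ t.2.1 + 2 * t.1 - 2 * t.2.2 ∧ ¬ 2 * t.1 + 2 * t.2.1 < t.2.2)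
      (q := fun t : ℤ × ℤ × ℤ => t.2.1 + 2 * t.1 - 2 * t.2.2 < 0 ∧ t.2.2 ≤ 2 * t.1 + 2 * t.2.1) (by
      rintro ⟨x, u, v⟩ h; simp only [mem_setA] at h ⊢; omega), hK, add_zero]
  rw [hQ, hR, ← Finset.sum_filter_add_sum_filter_not (setA N)
    (fun t => 0 ≤ t.2.1 + 2 * t.1 - 2 * t.2.2), hH]
  have h3 : (3 : Z3) = 0 := by decide
  have hJ := stepJ (N := N)
  have hP := stepPJ hN
  simp only [Finset.sum_sub_distrib, Finset.sum_add_distrib]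
  rw [hP, hJ]
  linear_combination (∑ t ∈ (setA N).filter (fun t => 0 ≤ t.2.1 + 2 * t.1 - 2 * t.2.2),
    (fa t.1 t.2.1 : Z3) - ∑ t ∈ (setA N).filter (fun t => 0 ≤ t.2.1 + 2 * t.1 - 2 * t.2.2),
    (fc t.1 t.2.1 : Z3)) * h3

end ntpart


section fieldpart
variable {F : Type*} [Field F]

/-- `(q^2;q^2)_n` -/
def poch {R : Type*} [CommRing R] (q : R) (n : ℕ) : R :=
  ∏ i ∈ Finset.range n, (1 - (q ^ 2) ^ (i + 1))

/-- `1/(q^2;q^2)_j`, zero for negative `j` -/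
noncomputable def einv (q : F) (j : ℤ) : F := if j < 0 then 0 else (poch q j.toNat)⁻¹

lemma poch_ne {q : F} (hq : ∀ k : ℕ, 0 < k → q ^ k ≠ 1) (n : ℕ) : poch q n ≠ 0 := by
  rw [poch, Finset.prod_ne_zero_iff]
  intro i _ h
  rw [← pow_mul] at h
  exact hq (2 * (i + 1)) (by omega) (sub_eq_zero.1 h).symm

lemma poch_succ {R : Type*} [CommRing R] (q : R) (n : ℕ) :
    poch q (n + 1) = poch q n * (1 - (q ^ 2) ^ (n + 1)) := by
  rw [poch, Finset.prod_range_succ, poch]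

lemma einv_rec {q : F} (hq : ∀ k : ℕ, 0 < k → q ^ k ≠ 1) (j : ℤ) :
    einv q (j - 1) = (1 - (q ^ 2) ^ j) * einv q j := by
  rcases lt_trichotomy j 0 with h | rfl | h
  · simp [einv, h, show j - 1 < 0 by omega]
  · simp [einv]
  · obtain ⟨n, rfl⟩ : ∃ n : ℕ, j = (n : ℤ) + 1 := ⟨(j - 1).toNat, by omega⟩
    have h1 := poch_ne hq n
    have h2 := poch_ne hq (n + 1)
    have e : einv q ((n : ℤ) + 1) = (poch q (n + 1))⁻¹ := by
      simp [einv, show ¬ ((n : ℤ) + 1 < 0) by omega]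
    have e' : einv q ((n : ℤ) + 1 - 1) = (poch q n)⁻¹ := by
      simp [einv]
    rw [e, e']
    rw [poch_succ] at h2 ⊢
    have h3 := right_ne_zero_of_mul h2
    rw [show (q ^ 2) ^ ((n : ℤ) + 1) = (q ^ 2) ^ (n + 1) by norm_cast]
    field_simp

/-- theta term -/
noncomputable def tht (q : F) (n : ℕ) (r : ℤ) : F :=
  q ^ (r ^ 2) * einv q (n - r) * einv q (n + r)

lemma tht_zero {q : F} {n : ℕ} {r : ℤ} (h : (n : ℤ) < |r|) : tht q n r = 0 := by
  rw [lt_abs] at h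
  rcases h with h | h
  · simp [tht, einv, show (n : ℤ) - r < 0 by omega]
  · simp [tht, einv, show (n : ℤ) + r < 0 by omega]

lemma tht_rec {q : F} (h0 : q ≠ 0) (hq : ∀ k : ℕ, 0 < k → q ^ k ≠ 1) (n : ℕ) (r : ℤ) :
    (1 - (q ^ 2) ^ (2 * n + 1)) * (1 - (q ^ 2) ^ (2 * n + 2)) * tht q (n + 1) r =
    (1 + (q ^ (2 * n + 1)) ^ 2) * tht q n r +
      q ^ (2 * n + 1) * (tht q n (r - 1) + tht q n (r + 1)) := by
  have a1 := einv_rec hq ((n : ℤ) + 1 - r)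
  have a2 := einv_rec hq ((n : ℤ) - r)
  have b1 := einv_rec hq ((n : ℤ) + 1 + r)
  have b2 := einv_rec hq ((n : ℤ) + r)
  rw [show (n : ℤ) + 1 - r - 1 = n - r by ring] at a1
  rw [show (n : ℤ) + 1 + r - 1 = n + r by ring] at b1
  rw [a1] at a2
  rw [b1] at b2
  unfold tht
  rw [show ((n + 1 : ℕ) : ℤ) - r = n + 1 - r by push_cast; ring,
    show ((n + 1 : ℕ) : ℤ) + r = n + 1 + r by push_cast; ring,
    show (n : ℤ) - (r - 1) = n + 1 - r by ring, show (n : ℤ) + (r - 1) = n + r - 1 by ring,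
    show (n : ℤ) - (r + 1) = n - r - 1 by ring, show (n : ℤ) + (r + 1) = n + 1 + r by ring,
    a1, b1, a2, b2]
  generalize einv q (n + 1 - r) = e1
  generalize einv q (n + 1 + r) = e2
  have q2 : q ^ 2 ≠ 0 := pow_ne_zero _ h0
  have c1 : (q ^ 2) ^ ((n : ℤ) + 1 - r) = q ^ (2 * n + 2) * (q ^ (2 * r))⁻¹ := by
    rw [← zpow_natCast, ← zpow_natCast, ← zpow_neg, ← zpow_mul, ← zpow_add₀ h0]
    congr 1; push_cast; ring
  have c2 : (q ^ 2) ^ ((n : ℤ) - r) = q ^ (2 * n) * (q ^ (2 * r))⁻¹ := by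
    rw [← zpow_natCast, ← zpow_natCast, ← zpow_neg, ← zpow_mul, ← zpow_add₀ h0]
    congr 1; push_cast; ring
  have c3 : (q ^ 2) ^ ((n : ℤ) + 1 + r) = q ^ (2 * n + 2) * (q ^ (2 * r)) := by
    rw [← zpow_natCast, ← zpow_natCast, ← zpow_mul, ← zpow_add₀ h0]
    congr 1; push_cast; ring
  have c4 : (q ^ 2) ^ ((n : ℤ) + r) = q ^ (2 * n) * (q ^ (2 * r)) := by
    rw [← zpow_natCast, ← zpow_natCast, ← zpow_mul, ← zpow_add₀ h0]
    congr 1; push_cast; ring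
  have c5 : q ^ ((r - 1) ^ 2) = q ^ (r ^ 2) * q * (q ^ (2 * r))⁻¹ := by
    rw [← zpow_neg, ← zpow_add_one₀ h0, ← zpow_add₀ h0]
    congr 1; ring
  have c6 : q ^ ((r + 1) ^ 2) = q ^ (r ^ 2) * q * q ^ (2 * r) := by
    rw [← zpow_add_one₀ h0, ← zpow_add₀ h0]
    congr 1; ring
  rw [c1, c2, c3, c4, c5, c6]
  have hz : q ^ (2 * r) ≠ 0 := zpow_ne_zero _ h0
  generalize q ^ (2 * r) = z at *
  generalize q ^ (r ^ 2) = w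
  have hb : q ^ (2 * n + 2) = q ^ (2 * n) * q ^ 2 := by ring
  have hb1 : q ^ (2 * n + 1) = q ^ (2 * n) * q := by ring
  have hb3 : (q ^ 2) ^ (2 * n + 1) = (q ^ (2 * n)) ^ 2 * q ^ 2 := by ring
  have hb4 : (q ^ 2) ^ (2 * n + 2) = (q ^ (2 * n)) ^ 2 * q ^ 4 := by ring
  rw [hb, hb1, hb3, hb4]
  generalize q ^ (2 * n) = y
  field_simp
  ring

lemma negone_shift (r : ℤ) : ((-1 : F)) ^ (r + 1) = - (-1) ^ r := by
  rw [zpow_add_one₀ (by simp)]; ring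

lemma shift_sum (f : ℤ → F) (L : ℕ) (hf : ∀ r : ℤ, (L : ℤ) ≤ |r| → f r = 0) :
    ∑ r ∈ Finset.Icc (-(L:ℤ)) L, f (r + 1) = ∑ r ∈ Finset.Icc (-(L:ℤ)) L, f r := by
  have h1 : ∑ r ∈ Finset.Icc (-(L:ℤ)) L, f (r + 1) =
      ∑ r ∈ Finset.Icc (-(L:ℤ) + 1) (L + 1), f r := by
    refine Finset.sum_nbij' (fun r => r + 1) (fun r => r - 1) ?_ ?_ ?_ ?_ ?_ <;>
      intro r h <;> simp at h ⊢ <;> omega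
  have h2 : ∑ r ∈ Finset.Icc (-(L:ℤ) + 1) (L + 1), f r =
      ∑ r ∈ Finset.Icc (-(L:ℤ)) (L + 1), f r := by
    apply Finset.sum_subset
    · intro r; simp; omega
    · intro r h h'
      apply hf
      simp at h h'
      rw [le_abs]; omega
  have h3 : ∑ r ∈ Finset.Icc (-(L:ℤ)) L, f r =
      ∑ r ∈ Finset.Icc (-(L:ℤ)) (L + 1), f r := by
    apply Finset.sum_subset
    · intro r; simp; omega
    · intro r h h'
      apply hf
      simp at h h'
      rw [le_abs]; omega
  rw [h1, h2, h3]

/-- finite Jacobi triple product at `z=-1` -/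
lemma jac {q : F} (h0 : q ≠ 0) (hq : ∀ k : ℕ, 0 < k → q ^ k ≠ 1) (n L : ℕ) (hL : n + 1 < L) :
    poch q (2 * n) * ∑ r ∈ Finset.Icc (-(L:ℤ)) L, (-1) ^ r * tht q n r =
      ∏ i ∈ Finset.range n, (1 - q ^ (2 * i + 1)) ^ 2 := by
  induction n with
  | zero =>
    simp only [poch, Finset.range_zero, Finset.prod_empty, Nat.mul_zero, one_mul]
    rw [Finset.sum_eq_single 0]
    · simp [tht, einv, poch]
    · intro r _ hr
      rw [tht_zero (by simpa using hr), mul_zero]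
    · simp
  | succ n ih =>
    have ih := ih (by omega)
    rw [Finset.prod_range_succ, ← ih]
    rw [show 2 * (n + 1) = 2 * n + 1 + 1 by ring, poch_succ, poch_succ, mul_assoc, mul_assoc,
      mul_assoc]
    congr 1
    rw [← mul_assoc, Finset.mul_sum]
    have e1 : ∑ r ∈ Finset.Icc (-(L:ℤ)) L, (-1) ^ (r + 1) * tht q n (r + 1) =
        ∑ r ∈ Finset.Icc (-(L:ℤ)) L, (-1) ^ r * tht q n r :=
      shift_sum (fun r => (-1) ^ r * tht q n r) L (fun r hr => by
        rw [tht_zero (by omega), mul_zero])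
    have e2 : ∑ r ∈ Finset.Icc (-(L:ℤ)) L, (-1) ^ (r + 1) * tht q n r =
        ∑ r ∈ Finset.Icc (-(L:ℤ)) L, (-1) ^ r * tht q n (r - 1) := by
      have := shift_sum (fun r => (-1) ^ r * tht q n (r - 1)) L (fun r hr => by
        rw [tht_zero, mul_zero]
        rw [le_abs] at hr
        rw [lt_abs]; omega)
      simpa using this
    simp only [negone_shift, neg_mul, Finset.sum_neg_distrib] at e1 e2
    have e3 : ∀ r ∈ Finset.Icc (-(L:ℤ)) L,
        (1 - (q ^ 2) ^ (2 * n + 1)) * (1 - (q ^ 2) ^ (2 * n + 1 + 1)) *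
          ((-1) ^ r * tht q (n + 1) r) =
        (1 + (q ^ (2 * n + 1)) ^ 2) * ((-1) ^ r * tht q n r) +
        q ^ (2 * n + 1) * ((-1) ^ r * tht q n (r - 1) + (-1) ^ r * tht q n (r + 1)) := by
      intro r _
      linear_combination (-1) ^ r * tht_rec h0 hq n r
    rw [Finset.sum_congr rfl e3, Finset.sum_add_distrib, ← Finset.mul_sum, ← Finset.mul_sum,
      Finset.sum_add_distrib]
    linear_combination - q ^ (2 * n + 1) * e1 - q ^ (2 * n + 1) * e2

/-- `∏_{k ≤ 2n} (1-q^k)/(1+q^k)` -/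
def Pfun (q : F) (n : ℕ) : F := ∏ k ∈ Finset.range (2 * n), ((1 - q ^ (k + 1)) / (1 + q ^ (k + 1)))

lemma Pfun_eq {q : F} (hq' : ∀ k : ℕ, 0 < k → q ^ k ≠ -1)
    (n : ℕ) :
    Pfun q n * poch q (2 * n) =
      poch q n ^ 2 * ∏ i ∈ Finset.range n, (1 - q ^ (2 * i + 1)) ^ 2 := by
  induction n with
  | zero => simp [Pfun, poch]
  | succ n ih =>
    have hP : Pfun q (n + 1) = Pfun q n * ((1 - q ^ (2 * n + 1)) / (1 + q ^ (2 * n + 1))) *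
        ((1 - q ^ (2 * n + 2)) / (1 + q ^ (2 * n + 2))) := by
      rw [Pfun, show 2 * (n + 1) = 2 * n + 1 + 1 by ring, Finset.prod_range_succ,
        Finset.prod_range_succ, Pfun]
    have h1 : 1 + q ^ (2 * n + 1) ≠ 0 := fun h => hq' (2 * n + 1) (by omega)
      (by linear_combination h)
    have h2 : 1 + q ^ (2 * n + 2) ≠ 0 := fun h => hq' (2 * n + 2) (by omega)
      (by linear_combination h)
    rw [hP, show 2 * (n + 1) = 2 * n + 1 + 1 by ring, poch_succ, poch_succ, poch_succ,
      Finset.prod_range_succ]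
    have f1 : 1 - (q ^ 2) ^ (2 * n + 1) = (1 - q ^ (2 * n + 1)) * (1 + q ^ (2 * n + 1)) := by ring
    have f2 : 1 - (q ^ 2) ^ (2 * n + 1 + 1) = (1 - q ^ (2 * n + 2)) * (1 + q ^ (2 * n + 2)) := by
      ring
    have f3 : (q ^ 2) ^ (n + 1) = q ^ (2 * n + 2) := by ring
    rw [f1, f2, f3]
    calc _ = (Pfun q n * poch q (2 * n)) * ((1 - q ^ (2 * n + 1)) ^ 2 * (1 - q ^ (2 * n + 2)) ^ 2) := by
          field_simp
      _ = _ := by rw [ih]; ring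

/-- `(b)_n^2/((b)_{n-r}(b)_{n+r})` -/
noncomputable def Gf (q : F) (n r : ℕ) : F :=
  poch q n ^ 2 * (einv q (n - r) * einv q (n + r))

lemma sum_sym {R : Type*} [CommRing R] (f : ℤ → R) (hf : ∀ r, f (-r) = f r) (L : ℕ) :
    ∑ r ∈ Finset.Icc (-(L:ℤ)) L, f r = f 0 + 2 * ∑ r ∈ Finset.Icc 1 L, f r := by
  induction L with
  | zero => simp
  | succ L ih =>
    rw [Finset.sum_Icc_succ_top (by omega), mul_add, ← add_assoc, ← ih]
    have : Finset.Icc (-((L + 1 : ℕ):ℤ)) (L + 1 : ℕ) =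
        insert (-((L + 1 : ℕ):ℤ)) (insert ((L + 1 : ℕ):ℤ) (Finset.Icc (-(L:ℤ)) L)) := by
      ext x; simp; omega
    rw [this, Finset.sum_insert (by simp; omega), Finset.sum_insert (by simp), hf]
    ring

lemma Pfun_sum {q : F} (h0 : q ≠ 0) (hq : ∀ k : ℕ, 0 < k → q ^ k ≠ 1)
    (hq' : ∀ k : ℕ, 0 < k → q ^ k ≠ -1) (n L : ℕ) (hL : n ≤ L) :
    Pfun q n = 1 + 2 * ∑ r ∈ Finset.Icc 1 L, (-1) ^ r * q ^ (r ^ 2) * Gf q n r := by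
  have e : ∑ r ∈ Finset.Icc 1 L, (-1) ^ r * q ^ (r ^ 2) * Gf q n r =
      ∑ r ∈ Finset.Icc 1 (L + 2), (-1) ^ r * q ^ (r ^ 2) * Gf q n r := by
    apply Finset.sum_subset
    · intro r; simp; omega
    · intro r h h'
      simp at h h'
      simp [Gf, einv, show n < r by omega]
  rw [e]
  have hp := poch_ne hq (2 * n)
  have hn := poch_ne hq n
  have hj := jac h0 hq n (L + 2) (by omega)
  have hP := Pfun_eq hq' n
  rw [← hj] at hP
  rw [sum_sym] at hP
  · apply mul_right_cancel₀ hp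
    rw [hP]
    have : tht q n 0 = (poch q n ^ 2)⁻¹ := by
      simp [tht, einv, show ¬ ((n : ℤ) < 0) by omega]; ring
    rw [this]
    have e2 : ∑ r ∈ Finset.Icc 1 (L + 2), (-1) ^ r * q ^ (r ^ 2) * Gf q n r =
      poch q n ^ 2 * ∑ r ∈ Finset.Icc 1 (L + 2), (-1) ^ (r : ℤ) * tht q n r := by
      rw [Finset.mul_sum]
      apply Finset.sum_congr rfl
      intro r _
      rw [Gf, tht, zpow_natCast]
      rw [show ((r : ℤ) ^ 2) = ((r ^ 2 : ℕ) : ℤ) by push_cast; ring, zpow_natCast]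
      ring
    rw [e2]
    field_simp
  · intro r
    rw [tht, tht, neg_sq, sub_neg_eq_add, ← sub_eq_add_neg]
    rw [zpow_neg, ← inv_zpow, inv_neg, inv_one]
    ring

lemma Gf_diff {q : F} (hq : ∀ k : ℕ, 0 < k → q ^ k ≠ 1) (n r : ℕ) (hr : 1 ≤ r) (h0 : q ≠ 0) :
    q ^ (2 * r) / (1 - q ^ (2 * r)) ^ 2 * Gf q (n + 1) r =
    q ^ (2 * r) / (1 - q ^ (2 * r)) ^ 2 * Gf q n r +
      q ^ (2 * (n + 1)) / (1 - q ^ (2 * (n + 1))) ^ 2 * Gf q (n + 1) r := by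
  have a1 := einv_rec hq ((n : ℤ) + 1 - r)
  have b1 := einv_rec hq ((n : ℤ) + 1 + r)
  rw [show (n : ℤ) + 1 - r - 1 = n - r by ring] at a1
  rw [show (n : ℤ) + 1 + r - 1 = n + r by ring] at b1
  unfold Gf
  rw [show ((n + 1 : ℕ) : ℤ) - r = n + 1 - r by push_cast; ring,
    show ((n + 1 : ℕ) : ℤ) + r = n + 1 + r by push_cast; ring, a1, b1]
  generalize einv q (n + 1 - r) = e1
  generalize einv q (n + 1 + r) = e2
  rw [poch_succ]
  generalize poch q n = p
  have c1 : (q ^ 2) ^ ((n : ℤ) + 1 - r) = q ^ (2 * (n + 1)) * (q ^ (2 * r))⁻¹ := by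
    rw [← zpow_natCast, ← zpow_natCast, ← zpow_natCast, ← zpow_neg, ← zpow_mul, ← zpow_add₀ h0]
    congr 1; push_cast; ring
  have c3 : (q ^ 2) ^ ((n : ℤ) + 1 + r) = q ^ (2 * (n + 1)) * (q ^ (2 * r)) := by
    rw [← zpow_natCast, ← zpow_natCast, ← zpow_natCast, ← zpow_mul, ← zpow_add₀ h0]
    congr 1; push_cast; ring
  rw [c1, c3, ← pow_mul]
  have h1 : 1 - q ^ (2 * r) ≠ 0 := fun h => hq (2 * r) (by omega) (sub_eq_zero.1 h).symm
  have h2 : 1 - q ^ (2 * (n + 1)) ≠ 0 :=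
    fun h => hq (2 * (n + 1)) (by omega) (sub_eq_zero.1 h).symm
  have h3 : q ^ (2 * r) ≠ 0 := pow_ne_zero _ h0
  generalize q ^ (2 * r) = z at *
  generalize q ^ (2 * (n + 1)) = y at *
  field_simp
  ring

theorem field_main {q : F} (h0 : q ≠ 0) (hq : ∀ k : ℕ, 0 < k → q ^ k ≠ 1)
    (hq' : ∀ k : ℕ, 0 < k → q ^ k ≠ -1) (M L : ℕ) (hL : M ≤ L) :
    ∑ n ∈ Finset.Icc 1 M, q ^ (2 * n) / (1 - q ^ (2 * n)) ^ 2 * Pfun q n =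
    ∑ n ∈ Finset.Icc 1 M, q ^ (2 * n) / (1 - q ^ (2 * n)) ^ 2 +
    2 * ∑ r ∈ Finset.Icc 1 L,
      (-1) ^ r * q ^ (r ^ 2) * (q ^ (2 * r) / (1 - q ^ (2 * r)) ^ 2 * Gf q M r) := by
  induction M with
  | zero =>
    simp only [zero_lt_one, Finset.Icc_eq_empty_of_lt, Finset.sum_empty, zero_add]
    symm
    rw [Finset.sum_eq_zero, mul_zero]
    intro r hr
    have : 0 < r := by simp at hr; omega
    simp [Gf, einv, this]
  | succ n ih =>
    rw [Finset.sum_Icc_succ_top (by omega), Finset.sum_Icc_succ_top (by omega), ih (by omega),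
      Pfun_sum h0 hq hq' (n + 1) L hL]
    have : ∀ r ∈ Finset.Icc 1 L, (-1) ^ r * q ^ (r ^ 2) *
        (q ^ (2 * r) / (1 - q ^ (2 * r)) ^ 2 * Gf q (n + 1) r) =
        (-1) ^ r * q ^ (r ^ 2) * (q ^ (2 * r) / (1 - q ^ (2 * r)) ^ 2 * Gf q n r) +
        q ^ (2 * (n + 1)) / (1 - q ^ (2 * (n + 1))) ^ 2 *
          ((-1) ^ r * q ^ (r ^ 2) * Gf q (n + 1) r) := by
      intro r hr
      rw [Gf_diff hq n r (by simp at hr; omega) h0]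
      ring
    rw [Finset.sum_congr rfl this, Finset.sum_add_distrib, ← Finset.mul_sum]
    ring

end fieldpart

section pspart
open PowerSeries

abbrev PS := PowerSeries (ZMod 3)

noncomputable def Tps (n : ℕ) : PS := X ^ (2 * n) * ((1 - X ^ (2 * n) : PS)⁻¹) ^ 2
noncomputable def Pps (n : ℕ) : PS :=
  ∏ k ∈ Finset.range (2 * n), ((1 - X ^ (k + 1)) * (1 + X ^ (k + 1) : PS)⁻¹)
noncomputable def Gps (M r : ℕ) : PS :=
  poch X M ^ 2 * ((poch (X : PS) (M - r))⁻¹ * (poch (X : PS) (M + r))⁻¹)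

lemma cc_poch (n : ℕ) : constantCoeff (poch (X : PS) n) = 1 := by
  rw [poch, map_prod]
  apply Finset.prod_eq_one
  intro i _
  simp

lemma cc_sub (n : ℕ) (h : n ≠ 0) : constantCoeff (1 - X ^ n : PS) = 1 := by
  simp [h]

lemma cc_add (n : ℕ) (h : n ≠ 0) : constantCoeff (1 + X ^ n : PS) = 1 := by
  simp [h]

lemma inj_algebraMap : Function.Injective (algebraMap PS (FractionRing PS)) :=
  IsFractionRing.injective PS (FractionRing PS)

lemma map_ps_inv (f : PS) (h : constantCoeff f = 1) :
    algebraMap PS (FractionRing PS) f⁻¹ = (algebraMap PS (FractionRing PS) f)⁻¹ := by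
  apply eq_inv_of_mul_eq_one_left
  rw [← map_mul, PowerSeries.inv_mul_cancel _ (by rw [h]; decide), map_one]

noncomputable abbrev qq : FractionRing PS := algebraMap PS (FractionRing PS) X

lemma qq_ne : qq ≠ 0 := by
  rw [qq, Ne, map_eq_zero_iff _ inj_algebraMap]
  exact X_ne_zero

lemma qq_pow (k : ℕ) (hk : 0 < k) : qq ^ k ≠ 1 := by
  rw [qq, ← map_pow, ← map_one (algebraMap PS (FractionRing PS))]
  intro h
  have := congrArg constantCoeff (inj_algebraMap h)
  simp [hk.ne'] at this

lemma qq_pow' (k : ℕ) (hk : 0 < k) : qq ^ k ≠ -1 := by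
  rw [qq, ← map_pow, ← map_one (algebraMap PS (FractionRing PS)), ← map_neg]
  intro h
  have := congrArg constantCoeff (inj_algebraMap h)
  simp [hk.ne'] at this

lemma map_poch (n : ℕ) : algebraMap PS (FractionRing PS) (poch X n) = poch qq n := by
  simp [poch]

lemma map_Pps (n : ℕ) : algebraMap PS (FractionRing PS) (Pps n) = Pfun qq n := by
  rw [Pps, Pfun, map_prod]
  apply Finset.prod_congr rfl
  intro k _
  rw [map_mul, map_ps_inv _ (cc_add _ (by omega)), div_eq_mul_inv]
  simp

lemma map_Tps (n : ℕ) (hn : 1 ≤ n) :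
    algebraMap PS (FractionRing PS) (Tps n) = qq ^ (2 * n) / (1 - qq ^ (2 * n)) ^ 2 := by
  rw [Tps, map_mul, map_pow _ (_⁻¹), map_ps_inv _ (cc_sub _ (by omega)), div_eq_mul_inv, inv_pow]
  simp

lemma map_Gps (M r : ℕ) (h : r ≤ M) :
    algebraMap PS (FractionRing PS) (Gps M r) = Gf qq M r := by
  rw [Gps, Gf, map_mul, map_mul, map_ps_inv _ (cc_poch _), map_ps_inv _ (cc_poch _), map_pow,
    map_poch, map_poch, map_poch]
  rw [einv, einv, if_neg (by omega), if_neg (by omega)]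
  congr 4
  · congr 1
    omega

theorem Pps_sum (M : ℕ) :
    Pps M = 1 + 2 * ∑ r ∈ Finset.Icc 1 M, (-1) ^ r * X ^ (r ^ 2) * Gps M r := by
  apply inj_algebraMap
  rw [map_Pps, Pfun_sum qq_ne qq_pow qq_pow' M M le_rfl]
  rw [map_add, map_mul, map_sum, map_one, map_ofNat]
  congr 2
  apply Finset.sum_congr rfl
  intro r hr
  rw [map_mul, map_Gps _ _ (by simp at hr; omega)]
  simp

theorem ps_main (M : ℕ) :
    ∑ n ∈ Finset.Icc 1 M, Tps n * Pps n = ∑ n ∈ Finset.Icc 1 M, Tps n +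
      2 * ∑ r ∈ Finset.Icc 1 M, (-1) ^ r * X ^ (r ^ 2) * (Tps r * Gps M r) := by
  apply inj_algebraMap
  have h := field_main qq_ne qq_pow qq_pow' M M le_rfl
  rw [map_add, map_mul, map_sum, map_sum, map_sum, map_ofNat]
  convert h using 1
  · apply Finset.sum_congr rfl
    intro n hn
    rw [map_mul, map_Pps, map_Tps _ (by simp at hn; omega)]
  · congr 1
    · apply Finset.sum_congr rfl
      intro n hn
      rw [map_Tps _ (by simp at hn; omega)]
    · congr 1
      apply Finset.sum_congr rfl
      intro r hr
      rw [map_mul, map_mul _ (Tps r), map_Tps _ (by simp at hr; omega),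
        map_Gps _ _ (by simp at hr; omega)]
      simp

/-- congruence modulo `X^K` -/
def CG (K : ℕ) (f g : PS) : Prop := X ^ K ∣ f - g

namespace CG
variable {K : ℕ} {f g h f' g' : PS}
lemma refl (f : PS) : CG K f f := by simp [CG]
lemma symm (h : CG K f g) : CG K g f := by
  unfold CG at *; rw [← neg_sub]; exact (dvd_neg).2 h
lemma trans (h1 : CG K f g) (h2 : CG K g h) : CG K f h := by
  unfold CG at *; rw [← sub_add_sub_cancel f g h]; exact dvd_add h1 h2
lemma add (h1 : CG K f g) (h2 : CG K f' g') : CG K (f + f') (g + g') := by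
  unfold CG at *; rw [add_sub_add_comm]; exact dvd_add h1 h2
lemma mul (h1 : CG K f g) (h2 : CG K f' g') : CG K (f * f') (g * g') := by
  unfold CG at *
  rw [show f * f' - g * g' = (f - g) * f' + g * (f' - g') by ring]
  exact dvd_add (h1.mul_right _) (h2.mul_left _)
lemma sum {ι : Type*} (s : Finset ι) (F G : ι → PS) (h : ∀ i ∈ s, CG K (F i) (G i)) :
    CG K (∑ i ∈ s, F i) (∑ i ∈ s, G i) := by
  unfold CG at *
  rw [← Finset.sum_sub_distrib]; exact Finset.dvd_sum h
lemma prod {ι : Type*} (s : Finset ι) (F G : ι → PS) (h : ∀ i ∈ s, CG K (F i) (G i)) :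
    CG K (∏ i ∈ s, F i) (∏ i ∈ s, G i) := by
  classical
  induction s using Finset.induction_on with
  | empty => simpa using refl 1
  | insert a s ha ih =>
    rw [Finset.prod_insert ha, Finset.prod_insert ha]
    exact mul (h a (by simp)) (ih fun i hi => h i (by simp [hi]))
lemma coeff (h : CG K f g) {n : ℕ} (hn : n < K) :
    PowerSeries.coeff n f = PowerSeries.coeff n g := by
  have := (X_pow_dvd_iff.1 h) n hn
  rw [map_sub] at this
  exact sub_eq_zero.1 this
lemma of_coeff (h : ∀ n < K, PowerSeries.coeff n f = PowerSeries.coeff n g) : CG K f g := by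
  rw [CG, X_pow_dvd_iff]
  intro m hm
  rw [map_sub, h m hm, sub_self]
lemma mono {K' : ℕ} (hK : K' ≤ K) (h : CG K f g) : CG K' f g :=
  (pow_dvd_pow _ hK).trans h
lemma xpow {K' : ℕ} (a : ℕ) (hK : K' ≤ K + a) (h : CG K f g) : CG K' (X ^ a * f) (X ^ a * g) := by
  rw [CG, ← mul_sub]
  refine (pow_dvd_pow _ hK).trans ?_
  rw [pow_add, mul_comm]
  exact mul_dvd_mul_left _ h
end CG

lemma poch_CG (m d : ℕ) : CG (2 * m + 2) (poch X (m + d)) (poch X m) := by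
  induction d with
  | zero => exact CG.refl _
  | succ d ih =>
    refine CG.trans ?_ ih
    rw [← add_assoc, poch_succ, CG]
    rw [show poch (X : PS) (m + d) * (1 - (X ^ 2) ^ (m + d + 1)) - poch X (m + d) =
      X ^ (2 * m + 2) * (- poch X (m + d) * X ^ (2 * d)) by ring]
    exact dvd_mul_right _ _

lemma Gps_CG (M r : ℕ) (h : r ≤ M) : CG (2 * (M - r) + 2) (Gps M r) 1 := by
  obtain ⟨m, rfl⟩ : ∃ m, M = m + r := ⟨M - r, by omega⟩
  rw [Nat.add_sub_cancel, Gps, Nat.add_sub_cancel]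
  have e1 := PowerSeries.mul_inv_cancel (poch (X : PS) m) (by rw [cc_poch]; decide)
  have e2 := PowerSeries.mul_inv_cancel (poch (X : PS) (m + r + r)) (by rw [cc_poch]; decide)
  have h1 := poch_CG m r
  have h2 := poch_CG m (r + r)
  rw [← add_assoc] at h2
  have : CG (2 * m + 2) (poch X (m + r) ^ 2) (poch X m * poch X (m + r + r)) := by
    rw [sq]
    exact h1.mul (h1.trans h2.symm)
  have := this.mul (CG.refl ((poch (X : PS) m)⁻¹ * (poch (X : PS) (m + r + r))⁻¹))
  rwa [show (poch X m * poch X (m + r + r)) * ((poch (X : PS) m)⁻¹ * (poch (X : PS) (m + r + r))⁻¹)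
    = (poch X m * (poch (X : PS) m)⁻¹) * (poch X (m + r + r) * (poch (X : PS) (m + r + r))⁻¹) by ring,
    e1, e2, one_mul] at this

lemma Gps_CG' (K r : ℕ) (h : r ≤ K) : CG K (X ^ (r ^ 2) * Gps K r) (X ^ (r ^ 2)) := by
  have := (Gps_CG K r h).xpow (K' := K) (r ^ 2) (by
    zify [h]
    nlinarith [sq_nonneg ((r:ℤ) - 1)])
  rwa [mul_one] at this

/-- the truncated theta function -/
noncomputable def phi (K : ℕ) : PS := 1 + 2 * ∑ r ∈ Finset.Icc 1 K, (-1) ^ r * X ^ (r ^ 2)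

lemma Pps_CG (K : ℕ) : CG K (Pps K) (phi K) := by
  rw [Pps_sum, phi]
  refine (CG.refl _).add ((CG.refl _).mul (CG.sum _ _ _ ?_))
  intro r hr
  rw [mul_assoc]
  exact (CG.refl _).mul (Gps_CG' K r (by simp at hr; omega))

/-- truncation of `x/(1-x)^2` -/
noncomputable def Ttr (K k : ℕ) : PS := ∑ u ∈ Finset.Icc 1 K, (u : PS) * X ^ (k * u)

lemma Ttr_id (x : PS) (B : ℕ) : (1 - x) ^ 2 * ∑ u ∈ Finset.Icc 1 B, (u : PS) * x ^ u =
    x - (B + 1) * x ^ (B + 1) + B * x ^ (B + 2) := by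
  induction B with
  | zero => simp
  | succ B ih =>
    rw [Finset.sum_Icc_succ_top (by omega), mul_add, ih]
    push_cast
    ring

lemma Ttr_CG' (K k : ℕ) (hk : 1 ≤ k) : CG K (X ^ k * ((1 - X ^ k : PS)⁻¹) ^ 2) (Ttr K k) := by
  have h1 := Ttr_id (X ^ k) K
  have h2 : (1 - X ^ k : PS) * (1 - X ^ k : PS)⁻¹ = 1 :=
    PowerSeries.mul_inv_cancel _ (by rw [cc_sub _ (by omega)]; decide)
  have h3 : ∑ u ∈ Finset.Icc 1 K, (u : PS) * (X ^ k) ^ u = Ttr K k := by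
    simp only [Ttr, pow_mul]
  rw [h3] at h1
  have h4 : X ^ k * ((1 - X ^ k : PS)⁻¹) ^ 2 - Ttr K k =
      (X ^ k) ^ K * ((((K : PS) + 1) * X ^ k - (K : PS) * X ^ (2 * k)) * ((1 - X ^ k : PS)⁻¹) ^ 2) := by
    have h5 : Ttr K k = Ttr K k * ((1 - X ^ k : PS) * (1 - X ^ k : PS)⁻¹) ^ 2 := by
      rw [h2]; ring
    rw [h5]
    linear_combination (- ((1 - X ^ k : PS)⁻¹) ^ 2) * h1
  rw [CG, h4, ← pow_mul]
  refine Dvd.dvd.mul_right (pow_dvd_pow _ ?_) _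
  nlinarith

lemma Ttr_CG (K r : ℕ) (hr : 1 ≤ r) : CG K (Tps r) (Ttr K (2 * r)) :=
  Ttr_CG' K (2 * r) (by omega)

/-- the truncated right-hand side -/
noncomputable def Cps (K : ℕ) : PS := ∑ n ∈ Finset.Icc 1 K, Ttr K (2 * n) +
  2 * ∑ r ∈ Finset.Icc 1 K, (-1) ^ r * (X ^ (r ^ 2) * Ttr K (2 * r))

/-- the finite product form of the generating function -/
noncomputable def Sps (K : ℕ) : PS := ∑ j ∈ Finset.Icc 1 K, Tps j *
  ∏ k ∈ Finset.Ico (2 * j) (2 * K), ((1 + X ^ (k + 1)) * (1 - X ^ (k + 1) : PS)⁻¹)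

theorem Sps_phi (K : ℕ) : CG K (Sps K * phi K) (Cps K) := by
  have h1 : Sps K * Pps K = ∑ n ∈ Finset.Icc 1 K, Tps n * Pps n := by
    rw [Sps, Finset.sum_mul]
    apply Finset.sum_congr rfl
    intro j hj
    rw [mul_assoc]
    congr 1
    have : Pps K = Pps j *
        ∏ k ∈ Finset.Ico (2 * j) (2 * K), ((1 - X ^ (k + 1)) * (1 + X ^ (k + 1) : PS)⁻¹) := by
      rw [Pps, Pps, Finset.prod_range_mul_prod_Ico]
      simp at hj; omega
    rw [this, mul_comm, mul_assoc, ← Finset.prod_mul_distrib, Finset.prod_eq_one, mul_one]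
    intro k _
    have e1 : (1 - X ^ (k + 1) : PS) * (1 - X ^ (k + 1) : PS)⁻¹ = 1 :=
      PowerSeries.mul_inv_cancel _ (by rw [cc_sub _ (by omega)]; decide)
    have e2 : (1 + X ^ (k + 1) : PS) * (1 + X ^ (k + 1) : PS)⁻¹ = 1 :=
      PowerSeries.mul_inv_cancel _ (by rw [cc_add _ (by omega)]; decide)
    linear_combination e1 * ((1 + X ^ (k + 1) : PS) * (1 + X ^ (k + 1) : PS)⁻¹) + e2
  have h2 : CG K (Sps K * phi K) (Sps K * Pps K) := (CG.refl _).mul (Pps_CG K).symm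
  refine h2.trans ?_
  rw [h1, ps_main, Cps]
  refine CG.add (CG.sum _ _ _ ?_) ((CG.refl _).mul (CG.sum _ _ _ ?_))
  · intro n hn
    exact Ttr_CG K n (by simp at hn; omega)
  · intro r hr
    have hr' : 1 ≤ r ∧ r ≤ K := by simpa using hr
    have : CG K (X ^ (r ^ 2) * (Tps r * Gps K r)) (X ^ (r ^ 2) * Ttr K (2 * r)) := by
      rw [show X ^ (r ^ 2) * (Tps r * Gps K r) = Tps r * (X ^ (r ^ 2) * Gps K r) by ring,
        mul_comm (X ^ (r ^ 2)) (Ttr K _)]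
      exact (Ttr_CG K r hr'.1).mul (Gps_CG' K r hr'.2)
    rw [mul_assoc]
    exact (CG.refl _).mul this

end pspart

section gfpart
open PowerSeries Finset
open scoped PowerSeries.WithPiTopology

lemma genFun_fin (f : ℕ → ℕ → ZMod 3) (L K : ℕ) (hL : ∀ i c, L < i → f i c = 0)
    (hK : ∀ i c, K < c → f i c = 0) :
    Nat.Partition.genFun f =
      ∏ i ∈ range L, (1 + ∑ c ∈ range K, C (f (i + 1) (c + 1)) * (X : PS) ^ ((i + 1) * (c + 1))) := by
  have h1 : ∀ i, ∑' j, f (i + 1) (j + 1) • (X : PS) ^ ((i + 1) * (j + 1)) =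
      ∑ c ∈ range K, C (f (i + 1) (c + 1)) * (X : PS) ^ ((i + 1) * (c + 1)) := by
    intro i
    rw [tsum_eq_sum (s := range K)]
    · apply Finset.sum_congr rfl
      intro c _
      rw [PowerSeries.smul_eq_C_mul]
    · intro c hc
      rw [hK _ _ (by simp at hc; omega), zero_smul]
  rw [Nat.Partition.genFun_eq_tprod]
  simp_rw [h1]
  rw [tprod_eq_prod (s := range L)]
  intro i hi
  rw [Finset.sum_eq_zero, add_zero]
  intro c _
  rw [hL _ _ (by simp at hi; omega), map_zero, zero_mul]

/-- the weight function attached to a smallest part `m` -/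
def Wf (w : ℕ → ZMod 3) (m K i c : ℕ) : ZMod 3 :=
  if c ≤ K then (if i = m then w c else if m < i ∧ i ≤ 2 * K then 2 else 0) else 0

lemma Wf_zero {w : ℕ → ZMod 3} {m K i c : ℕ} (h1 : i ≠ m) (h2 : ¬ (m < i ∧ i ≤ 2 * K)) :
    Wf w m K i c = 0 := by
  rw [Wf, if_neg h1, if_neg h2, ite_self]

noncomputable def Rtr (K k : ℕ) : PS := 1 + ∑ c ∈ range K, 2 * (X : PS) ^ (k * (c + 1))

lemma Rtr_id (x : PS) (K : ℕ) : (1 - x) * (1 + ∑ c ∈ range K, 2 * x ^ (c + 1)) =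
    1 + x - 2 * x ^ (K + 1) := by
  induction K with
  | zero => simp; ring
  | succ K ih =>
    rw [Finset.sum_range_succ, ← add_assoc, mul_add, ih]
    ring

lemma Rtr_CG (K k : ℕ) (hk : 1 ≤ k) : CG K (Rtr K k) ((1 + X ^ k) * (1 - X ^ k : PS)⁻¹) := by
  have h1 := Rtr_id (X ^ k) K
  have h2 : (1 - X ^ k : PS) * (1 - X ^ k : PS)⁻¹ = 1 :=
    PowerSeries.mul_inv_cancel _ (by rw [cc_sub _ (by omega)]; decide)
  have h3 : 1 + ∑ c ∈ range K, 2 * ((X : PS) ^ k) ^ (c + 1) = Rtr K k := by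
    simp only [Rtr, pow_mul]
  rw [h3] at h1
  have h4 : Rtr K k - (1 + X ^ k) * (1 - X ^ k : PS)⁻¹ =
      (X ^ k) ^ K * (X ^ k * (- 2 * (1 - X ^ k : PS)⁻¹)) := by
    linear_combination ((1 - X ^ k : PS)⁻¹) * h1 - Rtr K k * h2
  rw [CG, h4, ← pow_mul]
  refine Dvd.dvd.mul_right (pow_dvd_pow _ ?_) _
  nlinarith

lemma genFun_Wf (w : ℕ → ZMod 3) (m K : ℕ) (hm : m + 1 ≤ 2 * K) :
    Nat.Partition.genFun (Wf w (m + 1) K) =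
      (1 + ∑ c ∈ range K, C (w (c + 1)) * (X : PS) ^ ((m + 1) * (c + 1))) *
        ∏ k ∈ Ico (m + 1) (2 * K), Rtr K (k + 1) := by
  rw [genFun_fin _ (2 * K) K, ← Finset.prod_range_mul_prod_Ico _ hm, Finset.prod_range_succ,
    Finset.prod_eq_one, one_mul]
  · congr 1
    · congr 1
      apply Finset.sum_congr rfl
      intro c hc
      rw [Wf, if_pos (by simp at hc; omega), if_pos rfl]
    · apply Finset.prod_congr rfl
      intro k hk
      rw [Rtr]
      congr 1
      apply Finset.sum_congr rfl
      intro c hc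
      simp at hc hk
      rw [Wf, if_pos (by omega), if_neg (by omega), if_pos (by omega)]
      rw [map_ofNat]
  · intro i hi
    rw [Finset.sum_eq_zero, add_zero]
    intro c _
    simp at hi
    rw [Wf_zero (by omega) (by omega), map_zero, zero_mul]
  · intro i c hi
    rw [Wf_zero (by omega) (by omega)]
  · intro i c hi
    rw [Wf, if_neg (by omega)]

lemma genFun_diff (j K : ℕ) (hj : 1 ≤ j) (hjK : j ≤ K) :
    Nat.Partition.genFun (Wf (fun c => (c : ZMod 3)) (2 * j) K) -
      Nat.Partition.genFun (Wf 0 (2 * j) K) =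
    Ttr K (2 * j) * ∏ k ∈ Ico (2 * j) (2 * K), Rtr K (k + 1) := by
  obtain ⟨m, hm⟩ : ∃ m, 2 * j = m + 1 := ⟨2 * j - 1, by omega⟩
  rw [hm, genFun_Wf _ _ _ (by omega), genFun_Wf _ _ _ (by omega), ← sub_mul]
  congr 1
  simp only [Pi.zero_apply, map_zero, zero_mul, Finset.sum_const_zero, add_zero, add_sub_cancel_left]
  rw [Ttr, ← Finset.Ico_add_one_right_eq_Icc, Finset.sum_Ico_eq_sum_range, Nat.add_sub_cancel]
  apply Finset.sum_congr rfl
  intro c _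
  rw [add_comm 1 c]
  rw [map_natCast]

lemma Sps_genFun (K : ℕ) : CG K (∑ j ∈ Icc 1 K,
    (Nat.Partition.genFun (Wf (fun c => (c : ZMod 3)) (2 * j) K) -
      Nat.Partition.genFun (Wf 0 (2 * j) K))) (Sps K) := by
  rw [Sps]
  apply CG.sum
  intro j hj
  simp at hj
  rw [genFun_diff _ _ hj.1 hj.2]
  exact (Ttr_CG K j hj.1).symm.mul (CG.prod _ _ _ fun k _ => Rtr_CG K (k + 1) (by omega))

lemma smallestPart_mem {n : ℕ} (p : Nat.Partition n) (hn : n ≠ 0) : smallestPart p ∈ p.parts := by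
  have : {m | m ∈ p.parts}.Nonempty := by
    by_contra h
    have h0 : p.parts = 0 := by
      apply Multiset.eq_zero_of_forall_notMem
      intro a ha
      exact h ⟨a, ha⟩
    have := p.parts_sum
    rw [h0] at this
    simp at this
    exact hn this.symm
  exact Nat.sInf_mem this

lemma smallestPart_le {n : ℕ} (p : Nat.Partition n) {i : ℕ} (hi : i ∈ p.parts) :
    smallestPart p ≤ i := Nat.sInf_le hi

lemma spt_expand (n : ℕ) (hn : n ≠ 0) : spt2bar n = ∑ p : n.Partition,
    if Even (smallestPart p) then
      p.parts.count (smallestPart p) * 2 ^ (p.parts.toFinset.card - 1) else 0 := by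
  classical
  let inst : ∀ p : Nat.Partition n, Fintype {s : Finset ℕ // s ⊆ p.parts.toFinset} := fun p =>
    Fintype.subtype p.parts.toFinset.powerset (by simp)
  have h : spt2bar n = ∑ p : n.Partition, ∑ t : {s : Finset ℕ // s ⊆ p.parts.toFinset},
      if Even (smallestPart p) ∧ smallestPart p ∉ t.1 then
        p.parts.count (smallestPart p) else 0 := by
    rw [← Fintype.sum_sigma']
    unfold spt2bar
    apply Fintype.sum_equiv (Equiv.refl _)
    intro o
    apply if_congr _ rfl rfl
    rfl
  rw [h]
  apply Finset.sum_congr rfl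
  intro p _
  have hs := smallestPart_mem p hn
  set s := smallestPart p
  have h2 : ∀ g : Finset ℕ → ℕ, ∑ t : {s : Finset ℕ // s ⊆ p.parts.toFinset}, g t.1 =
      ∑ t ∈ p.parts.toFinset.powerset, g t := by
    intro g
    symm
    apply Finset.sum_subtype
    simp
  rw [h2 (fun t => if Even s ∧ s ∉ t then p.parts.count s else 0)]
  split_ifs with he
  · simp only [he, true_and]
    rw [← Finset.sum_filter, Finset.sum_const, smul_eq_mul, mul_comm]
    congr 1
    rw [← Finset.card_erase_of_mem (by simpa using hs : s ∈ p.parts.toFinset),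
      ← Finset.card_powerset]
    congr 1
    ext t
    simp only [mem_filter, mem_powerset]
    rw [Finset.subset_erase]
  · simp [he]

lemma Wf_prod (n K : ℕ) (hn : n ≠ 0) (hK : n < K) (p : n.Partition) :
    ∑ j ∈ Icc 1 K, (p.parts.toFinsupp.prod (Wf (fun c => (c : ZMod 3)) (2 * j) K) -
      p.parts.toFinsupp.prod (Wf 0 (2 * j) K)) =
    (((if Even (smallestPart p) then
      p.parts.count (smallestPart p) * 2 ^ (p.parts.toFinset.card - 1) else 0) : ℕ) : ZMod 3) := by
  have hs := smallestPart_mem p hn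
  have hs' : smallestPart p ∈ p.parts.toFinset := by simpa using hs
  have hle : ∀ i ∈ p.parts.toFinset, smallestPart p ≤ i :=
    fun i hi => smallestPart_le p (by simpa using hi)
  have hup : ∀ i ∈ p.parts.toFinset, i ≤ n := fun i hi => by
    have := Multiset.le_sum_of_mem (by simpa using hi : i ∈ p.parts)
    rwa [p.parts_sum] at this
  have hpos : 0 < smallestPart p := p.parts_pos hs
  have hcount : ∀ i ∈ p.parts.toFinset, p.parts.count i ≤ K := fun i hi => by
    have h1 := Multiset.count_le_card i p.parts
    have h2 : p.parts.card ≤ n := by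
      have := Multiset.card_nsmul_le_sum (s := p.parts) (a := 1) (fun x hx => p.parts_pos hx)
      rw [p.parts_sum] at this
      simpa using this
    omega
  simp only [Finsupp.prod, Multiset.toFinsupp_support, Multiset.toFinsupp_apply]
  set s := smallestPart p with hsdef
  have key : ∀ j ∈ Icc 1 K, 2 * j ≠ s →
      ∏ i ∈ p.parts.toFinset, Wf (fun c => (c : ZMod 3)) (2 * j) K i (p.parts.count i) -
      ∏ i ∈ p.parts.toFinset, Wf 0 (2 * j) K i (p.parts.count i) = 0 := by
    intro j _ hne
    rcases lt_or_gt_of_ne hne with h | h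
    · rw [sub_eq_zero]
      apply Finset.prod_congr rfl
      intro i hi
      have := hle i hi
      rw [Wf, Wf, if_neg (by omega : ¬ i = 2 * j), if_neg (by omega : ¬ i = 2 * j)]
    · rw [Finset.prod_eq_zero hs', Finset.prod_eq_zero hs', sub_zero]
      · rw [Wf_zero (by omega) (by omega)]
      · rw [Wf_zero (by omega) (by omega)]
  split_ifs with he
  · obtain ⟨j, hj⟩ := he.two_dvd
    have hjK : j ∈ Icc 1 K := by
      have := hup s hs'
      simp; omega
    rw [Finset.sum_eq_single_of_mem j hjK (fun b hb hbj => key b hb (by omega)), ← hj,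
      ← Finset.mul_prod_erase _ _ hs', ← Finset.mul_prod_erase _ _ hs']
    have e1 : ∀ w, Wf w s K s (p.parts.count s) = w (p.parts.count s) := by
      intro w
      rw [Wf, if_pos (hcount s hs'), if_pos rfl]
    rw [e1, e1, Pi.zero_apply, zero_mul, sub_zero]
    rw [Finset.prod_congr rfl (g := fun _ => (2 : ZMod 3)), Finset.prod_const,
      Finset.card_erase_of_mem hs']
    · push_cast; rfl
    · intro i hi
      rw [Finset.mem_erase] at hi
      have h1 := hle i hi.2
      have h2 := hup i hi.2
      have h3 := hi.1
      rw [Wf, if_pos (hcount i hi.2), if_neg h3, if_pos (by omega)]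
  · rw [Finset.sum_eq_zero]
    · simp
    · intro j hj
      apply key j hj
      intro h
      exact he (h ▸ even_two_mul j)

theorem coeff_Sps (n K : ℕ) (hn : n ≠ 0) (hK : n < K) :
    PowerSeries.coeff n (Sps K) = (spt2bar n : ZMod 3) := by
  rw [← (Sps_genFun K).coeff hK, spt_expand n hn, map_sum]
  simp only [map_sub, Nat.Partition.coeff_genFun]
  push_cast
  simp_rw [← Finset.sum_sub_distrib]
  rw [Finset.sum_comm]
  apply Finset.sum_congr rfl
  intro p _
  rw [Wf_prod n K hn hK p]
  push_cast
  rfl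

end gfpart

section finpart
open PowerSeries Finset

/-- the part of a power series supported on exponents in the residue class `j` mod 3 -/
noncomputable def cl (j : ZMod 3) (f : PS) : PS :=
  PowerSeries.mk fun n => if (n : ZMod 3) = j then coeff n f else 0

/-- supported on exponents in the class `i` -/
def Gr (i : ZMod 3) (f : PS) : Prop := ∀ n : ℕ, coeff n f ≠ 0 → (n : ZMod 3) = i

lemma coeff_cl (j : ZMod 3) (f : PS) (n : ℕ) :
    coeff n (cl j f) = if (n : ZMod 3) = j then coeff n f else 0 := by
  rw [cl, coeff_mk]

lemma cl_add (j : ZMod 3) (f g : PS) : cl j (f + g) = cl j f + cl j g := by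
  ext n
  simp only [coeff_cl, map_add]
  split_ifs <;> simp

lemma cl_sub (j : ZMod 3) (f g : PS) : cl j (f - g) = cl j f - cl j g := by
  ext n
  simp only [coeff_cl, map_sub]
  split_ifs <;> simp

lemma cl_mul {i : ZMod 3} {f : PS} (hf : Gr i f) (j : ZMod 3) (g : PS) :
    cl (i + j) (f * g) = f * cl j g := by
  ext n
  rw [coeff_cl, coeff_mul, coeff_mul]
  by_cases hn : (n : ZMod 3) = i + j
  · rw [if_pos hn]
    apply Finset.sum_congr rfl
    rintro ⟨a, b⟩ hab
    rw [Finset.HasAntidiagonal.mem_antidiagonal] at hab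
    simp only at hab ⊢
    by_cases ha : coeff a f = 0
    · simp [ha]
    · rw [coeff_cl, if_pos]
      have := hf a ha
      have h2 : (n : ZMod 3) = a + b := by rw [← hab]; push_cast; rfl
      rw [hn, this] at h2
      exact (add_left_cancel h2).symm
  · rw [if_neg hn]
    symm
    apply Finset.sum_eq_zero
    rintro ⟨a, b⟩ hab
    rw [Finset.HasAntidiagonal.mem_antidiagonal] at hab
    simp only at hab ⊢
    by_cases ha : coeff a f = 0
    · simp [ha]
    · rw [coeff_cl, if_neg, mul_zero]
      intro hb
      apply hn
      rw [← hab, ← hf a ha, ← hb]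
      push_cast
      rfl

lemma Gr_mul {i j : ZMod 3} {f g : PS} (hf : Gr i f) (hg : Gr j g) : Gr (i + j) (f * g) := by
  intro n hn
  rw [coeff_mul] at hn
  obtain ⟨⟨a, b⟩, hab, h⟩ := Finset.exists_ne_zero_of_sum_ne_zero hn
  rw [Finset.HasAntidiagonal.mem_antidiagonal] at hab
  simp only at hab h
  rw [← hf a (left_ne_zero_of_mul h), ← hg b (right_ne_zero_of_mul h), ← hab]
  push_cast
  rfl

lemma CG_cl {K : ℕ} {f g : PS} (h : CG K f g) (j : ZMod 3) : CG K (cl j f) (cl j g) := by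
  apply CG.of_coeff
  intro n hn
  rw [coeff_cl, coeff_cl, h.coeff hn]

/-- weighted truncated theta function -/
noncomputable def Th (w : ZMod 3 → ZMod 3) (K : ℕ) : PS :=
  ∑ x ∈ Icc (-(K : ℤ)) K, C (w (x : ZMod 3) * (-1) ^ x.natAbs) * X ^ (x.natAbs ^ 2)

lemma coeff_Th (w : ZMod 3 → ZMod 3) (K n : ℕ) : coeff n (Th w K) =
    ∑ x ∈ Icc (-(K : ℤ)) K,
      (w (x : ZMod 3) * (-1) ^ x.natAbs) * (if n = x.natAbs ^ 2 then 1 else 0) := by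
  rw [Th, map_sum]
  apply Finset.sum_congr rfl
  intro x _
  rw [coeff_C_mul, coeff_X_pow]

lemma natAbs_sq_cast (x : ℤ) : ((x.natAbs ^ 2 : ℕ) : ZMod 3) = (x : ZMod 3) ^ 2 := by
  have : ((x.natAbs ^ 2 : ℕ) : ℤ) = x ^ 2 := by
    rw [Nat.cast_pow, Int.natAbs_sq]
  rw [← Int.cast_natCast, this, Int.cast_pow]

lemma Gr_Th {w : ZMod 3 → ZMod 3} {i : ZMod 3} (h : ∀ x, w x ≠ 0 → x ^ 2 = i) (K : ℕ) :
    Gr i (Th w K) := by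
  intro n hn
  rw [coeff_Th] at hn
  obtain ⟨x, _, hx⟩ := Finset.exists_ne_zero_of_sum_ne_zero hn
  have h1 := left_ne_zero_of_mul (left_ne_zero_of_mul hx)
  have h2 := right_ne_zero_of_mul hx
  have h3 : n = x.natAbs ^ 2 := by
    by_contra hc
    exact h2 (if_neg hc)
  rw [h3, natAbs_sq_cast]
  exact h _ h1

lemma cc_Th (w : ZMod 3 → ZMod 3) (K : ℕ) : constantCoeff (Th w K) = w 0 := by
  rw [← coeff_zero_eq_constantCoeff_apply, coeff_Th,
    Finset.sum_eq_single_of_mem (0 : ℤ) (by simp)]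
  · simp
  · intro x _ hx
    rw [if_neg, mul_zero]
    intro h
    have : x.natAbs = 0 := by
      simpa using h.symm
    omega

lemma Th_phi (K : ℕ) : Th 1 K = phi K := by
  rw [Th, sum_sym (fun x : ℤ => C ((1 : ZMod 3 → ZMod 3) (x : ZMod 3) * (-1) ^ x.natAbs) *
    (X : PS) ^ (x.natAbs ^ 2)) (by intro r; simp), phi]
  congr 1
  · simp
  · congr 1
    apply Finset.sum_congr rfl
    intro r _
    simp

lemma Cps_eq (K : ℕ) : Cps K =
    (∑ p ∈ Icc 1 K ×ˢ Icc 1 K, C (p.2 : ZMod 3) * X ^ (2 * p.1 * p.2)) +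
    C 2 * ∑ p ∈ Icc 1 K ×ˢ Icc 1 K, C ((-1) ^ p.1 * (p.2 : ZMod 3)) *
      X ^ (p.1 ^ 2 + 2 * p.1 * p.2) := by
  rw [Cps, Finset.sum_product, Finset.sum_product]
  refine congrArg₂ (· + ·) ?_ ?_
  · apply Finset.sum_congr rfl
    intro n _
    rw [Ttr]
    apply Finset.sum_congr rfl
    intro u _
    rw [map_natCast]
  · rw [map_ofNat]
    congr 1
    apply Finset.sum_congr rfl
    intro r _
    rw [Ttr, Finset.mul_sum, Finset.mul_sum]
    apply Finset.sum_congr rfl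
    intro u _
    rw [map_mul, map_natCast, map_pow, map_neg, map_one]
    ring

lemma factA (K N : ℕ) (hN : (N : ZMod 3) = 1) : coeff N (Cps K) = 0 := by
  rw [Cps_eq, map_add, coeff_C_mul, map_sum, map_sum]
  simp only [coeff_C_mul, coeff_X_pow]
  have h2 : ∑ p ∈ Icc 1 K ×ˢ Icc 1 K, ((-1) ^ p.1 * (p.2 : ZMod 3)) *
      (if N = p.1 ^ 2 + 2 * p.1 * p.2 then 1 else 0) = 0 := by
    apply Finset.sum_eq_zero
    rintro ⟨r, u⟩ _
    simp only
    split_ifs with h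
    · have h' := congrArg (Nat.cast : ℕ → ZMod 3) h
      push_cast at h'
      rw [hN] at h'
      have : ∀ a b : ZMod 3, 1 = a ^ 2 + 2 * a * b → b = 0 := by decide
      rw [this _ _ h']
      simp
    · simp
  rw [h2, mul_zero, add_zero]
  have h3 : ∑ p ∈ Icc 1 K ×ˢ Icc 1 K, (p.2 : ZMod 3) * (if N = 2 * p.1 * p.2 then 1 else 0) =
      ∑ p ∈ Icc 1 K ×ˢ Icc 1 K, (p.1 : ZMod 3) * (if N = 2 * p.1 * p.2 then 1 else 0) := by
    rw [Finset.sum_product, Finset.sum_product_right]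
    apply Finset.sum_congr rfl
    intro a _
    apply Finset.sum_congr rfl
    intro b _
    simp only
    rw [mul_right_comm]
  have h4 : ∑ p ∈ Icc 1 K ×ˢ Icc 1 K, (p.2 : ZMod 3) * (if N = 2 * p.1 * p.2 then 1 else 0) +
      ∑ p ∈ Icc 1 K ×ˢ Icc 1 K, (p.1 : ZMod 3) * (if N = 2 * p.1 * p.2 then 1 else 0) = 0 := by
    rw [← Finset.sum_add_distrib]
    apply Finset.sum_eq_zero
    rintro ⟨r, u⟩ _
    simp only
    split_ifs with h
    · have h' := congrArg (Nat.cast : ℕ → ZMod 3) h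
      push_cast at h'
      rw [hN] at h'
      have : ∀ a b : ZMod 3, 1 = 2 * a * b → b * 1 + a * 1 = 0 := by decide
      exact this _ _ h'
    · simp
  rw [← h3] at h4
  have : ∀ z : ZMod 3, z + z = 0 → z = 0 := by decide
  exact this _ h4

lemma neg_one_pow_sq (a : ℕ) : (-1 : ZMod 3) ^ (a ^ 2) = (-1) ^ a := by
  rcases Nat.even_or_odd a with h | h
  · rw [h.neg_one_pow, (h.pow_of_ne_zero two_ne_zero).neg_one_pow]
  · rw [h.neg_one_pow, (h.pow).neg_one_pow]

lemma sumA (K N : ℕ) (hK : N < K) :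
    ∑ t ∈ Icc (-(K : ℤ)) K ×ˢ (Icc 1 K ×ˢ Icc 1 K),
      (wt (t.1 : ZMod 3) * (t.2.2 : ZMod 3)) *
        (if N = t.1.natAbs ^ 2 + 2 * t.2.1 * t.2.2 then 1 else 0) =
    ∑ t ∈ setA N, wt t.1 * t.2.1 := by
  simp only [mul_ite, mul_one, mul_zero]
  rw [← Finset.sum_filter]
  refine Finset.sum_nbij' (fun t => (t.1, (t.2.2 : ℤ), (t.2.1 : ℤ)))
    (fun t => (t.1, t.2.2.natAbs, t.2.1.natAbs)) ?_ ?_ ?_ ?_ ?_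
  · rintro ⟨x, n, u⟩ ht
    simp only [mem_filter, mem_product, mem_Icc] at ht
    rw [mem_setA]
    simp only
    refine ⟨by omega, by omega, ?_⟩
    rw [ht.2]
    push_cast
    rw [sq_abs]
    ring
  · rintro ⟨x, u, v⟩ ht
    rw [mem_setA] at ht
    obtain ⟨hu, hv, h⟩ := ht
    lift u to ℕ using hu.le
    lift v to ℕ using hv.le
    have h1 : N = x.natAbs ^ 2 + 2 * v * u := by
      zify
      rw [sq_abs, ← h]; ring
    have hx : x.natAbs ≤ K := by nlinarith
    have hu' : 0 < u := by omega
    have hv' : 0 < v := by omega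
    have : u ≤ K := by nlinarith
    have : v ≤ K := by nlinarith
    simp only [mem_filter, mem_product, mem_Icc, Int.natAbs_natCast]
    exact ⟨by omega, h1⟩
  · rintro ⟨x, n, u⟩ ht
    simp
  · rintro ⟨x, u, v⟩ ht
    rw [mem_setA] at ht
    simp only [Prod.mk.injEq, true_and]
    omega
  · rintro ⟨x, n, u⟩ ht
    simp

lemma sumQ (K N : ℕ) (hK : N < K) :
    ∑ t ∈ Icc (-(K : ℤ)) K ×ˢ (Icc 1 K ×ˢ Icc 1 K),
      (wt (t.1 : ZMod 3) * (t.2.2 : ZMod 3)) *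
        (if N = t.1.natAbs ^ 2 + (t.2.1 ^ 2 + 2 * t.2.1 * t.2.2) then 1 else 0) =
    ∑ t ∈ (setQ N).filter (fun t => 0 < t.2.2), wt t.1 * t.2.2 := by
  simp only [mul_ite, mul_one, mul_zero]
  rw [← Finset.sum_filter]
  refine Finset.sum_nbij' (fun t => (t.1, (t.2.1 : ℤ) + t.2.2, (t.2.2 : ℤ)))
    (fun t => (t.1, (t.2.1 - t.2.2).natAbs, t.2.2.natAbs)) ?_ ?_ ?_ ?_ ?_
  · rintro ⟨x, n, u⟩ ht
    simp only [mem_filter, mem_product, mem_Icc] at ht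
    rw [mem_filter, mem_setQ]
    simp only
    refine ⟨⟨by omega, by omega, ?_⟩, by omega⟩
    rw [ht.2]
    push_cast
    rw [sq_abs]
    ring
  · rintro ⟨x, a, m⟩ ht
    rw [mem_filter, mem_setQ] at ht
    obtain ⟨⟨h1, h2, h⟩, hm⟩ := ht
    simp only at hm
    obtain ⟨r, rfl⟩ : ∃ r, a = r + m := ⟨a - m, by ring⟩
    have hr : 0 < r := by omega
    lift r to ℕ using hr.le
    lift m to ℕ using hm.le
    have h1 : N = x.natAbs ^ 2 + (r ^ 2 + 2 * r * m) := by
      zify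
      rw [sq_abs, ← h]; ring
    have hr' : 0 < r := by omega
    have hm' : 0 < m := by omega
    have hx : x.natAbs ≤ K := by nlinarith
    have : r ≤ K := by nlinarith
    have : m ≤ K := by nlinarith
    simp only [mem_filter, mem_product, mem_Icc, Int.natAbs_natCast, add_sub_cancel_right]
    exact ⟨by omega, h1⟩
  · rintro ⟨x, n, u⟩ ht
    simp
  · rintro ⟨x, u, v⟩ ht
    rw [mem_filter, mem_setQ] at ht
    simp only at ht
    simp only [Prod.mk.injEq, true_and]
    omega
  · rintro ⟨x, n, u⟩ ht
    simp

lemma factB (K N : ℕ) (hN : (N : ZMod 3) = 0) (hK : N < K) : coeff N (Th wt K * Cps K) = 0 := by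
  have h3 : (3 : ℤ) ∣ N := by
    have := (ZMod.natCast_eq_zero_iff N 3).1 hN
    exact_mod_cast this
  have hnt := nt_main h3
  rw [← sumA K N hK, ← sumQ K N hK] at hnt
  rw [Cps_eq, mul_add, mul_left_comm, Th, Finset.sum_mul_sum, Finset.sum_mul_sum,
    ← Finset.sum_product', ← Finset.sum_product', map_add, coeff_C_mul, map_sum, map_sum]
  have hsum : ∀ a b : ZMod 3, a + 2 * b = 0 → (-1) ^ N * a + 2 * ((-1) ^ N * b) = 0 := by
    intro a b h
    linear_combination (-1) ^ N * h
  have := hsum _ _ hnt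
  rw [Finset.mul_sum, Finset.mul_sum] at this
  rw [← this]
  congr 1
  · apply Finset.sum_congr rfl
    rintro ⟨x, n, u⟩ _
    simp only
    rw [show ∀ (a b : ZMod 3) (i j : ℕ), C a * (X : PS) ^ i * (C b * X ^ j) = C (a * b) * X ^ (i + j)
      by intro a b i j; rw [map_mul]; ring, coeff_C_mul, coeff_X_pow]
    split_ifs with h
    · rw [h, pow_add, mul_assoc 2, pow_mul _ 2, neg_one_sq, one_pow, neg_one_pow_sq]
      ring
    · simp
  · congr 1
    apply Finset.sum_congr rfl
    rintro ⟨x, n, u⟩ _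
    simp only
    rw [show ∀ (a b : ZMod 3) (i j : ℕ), C a * (X : PS) ^ i * (C b * X ^ j) = C (a * b) * X ^ (i + j)
      by intro a b i j; rw [map_mul]; ring, coeff_C_mul, coeff_X_pow]
    split_ifs with h
    · rw [h, pow_add, pow_add, mul_assoc 2, pow_mul _ 2, neg_one_sq, one_pow, neg_one_pow_sq,
        neg_one_pow_sq]
      ring
    · simp

lemma dvd_cancel {K : ℕ} {f g : PS} (hf : constantCoeff f = 1) (h : X ^ K ∣ f * g) :
    X ^ K ∣ g := by
  have h2 : f * f⁻¹ = 1 := PowerSeries.mul_inv_cancel _ (by rw [hf]; decide)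
  have : g = (f * g) * f⁻¹ := by linear_combination (-g) * h2
  rw [this]
  exact h.mul_right _

theorem S1_zero (K : ℕ) : X ^ K ∣ cl 1 (Sps K) := by
  set A := Th (fun x => if x = 0 then 1 else 0) K with hA
  set B := Th (fun x => if x = 0 then 0 else 1) K with hB
  set S := Sps K with hS
  have gA : Gr 0 A := Gr_Th (by decide) K
  have gB : Gr 1 B := Gr_Th (by decide) K
  have hphi : phi K = A + B := by
    rw [← Th_phi, hA, hB, Th, Th, Th, ← Finset.sum_add_distrib]
    apply Finset.sum_congr rfl
    intro x _
    rw [← add_mul, ← map_add, ← add_mul]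
    congr 3
    by_cases h : (x : ZMod 3) = 0 <;> simp [h]
  have hwt : Th wt K = A - B := by
    rw [hA, hB, Th, Th, Th, ← Finset.sum_sub_distrib]
    apply Finset.sum_congr rfl
    intro x _
    rw [← sub_mul, ← map_sub, ← sub_mul]
    congr 3
    by_cases h : (x : ZMod 3) = 0 <;> simp [h, wt]
  have cA : constantCoeff A = 1 := by rw [hA, cc_Th]; simp
  have cB : constantCoeff B = 0 := by rw [hB, cc_Th]; simp
  have hmain := Sps_phi K
  rw [hphi] at hmain
  have e1 : X ^ K ∣ A * cl 1 S + B * cl 0 S := by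
    have h1 := CG_cl hmain 1
    have h2 : CG K (cl 1 (Cps K)) 0 := by
      apply CG.of_coeff
      intro n _
      rw [coeff_cl, map_zero]
      split_ifs with h
      · exact factA K n h
      · rfl
    have h3 := h1.trans h2
    rw [CG, sub_zero, ← hS, show S * (A + B) = A * S + B * S by ring, cl_add] at h3
    have a1 := cl_mul gA 1 S
    have a2 := cl_mul gB 0 S
    rw [zero_add] at a1
    rw [add_zero] at a2
    rwa [a1, a2] at h3
  have e2 : X ^ K ∣ A * A * cl 0 S - B * B * cl 1 S := by
    have h1 := CG_cl ((CG.refl (Th wt K)).mul hmain) 0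
    have h2 : CG K (cl 0 (Th wt K * Cps K)) 0 := by
      apply CG.of_coeff
      intro n hn
      rw [coeff_cl, map_zero]
      split_ifs with h
      · exact factB K n h hn
      · rfl
    have h3 := h1.trans h2
    rw [CG, sub_zero, ← hS, hwt, show (A - B) * (S * (A + B)) = A * A * S - B * B * S by ring,
      cl_sub] at h3
    have a1 := cl_mul (Gr_mul gA gA) 0 S
    have a2 := cl_mul (Gr_mul gB gB) 1 S
    rw [add_zero, add_zero] at a1
    rw [show (1 + 1 + 1 : ZMod 3) = 0 by decide] at a2
    rwa [a1, a2] at h3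
  have e3 : X ^ K ∣ cl 0 S := by
    apply dvd_cancel (f := A ^ 3 + B ^ 3) (by simp [cA, cB])
    rw [show (A ^ 3 + B ^ 3) * cl 0 S = A * (A * A * cl 0 S - B * B * cl 1 S) +
      B * B * (A * cl 1 S + B * cl 0 S) by ring]
    exact dvd_add (e2.mul_left _) (e1.mul_left _)
  apply dvd_cancel cA
  rw [show A * cl 1 S = (A * cl 1 S + B * cl 0 S) - B * cl 0 S by ring]
  exact dvd_sub e1 (e3.mul_left _)

end finpart

theorem spt2bar_three_mul_add_one_div_three (n : ℕ) : 3 ∣ spt2bar (3 * n + 1) := by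
  have h1 := S1_zero (3 * n + 2)
  have h2 := (PowerSeries.X_pow_dvd_iff.1 h1) (3 * n + 1) (by omega)
  rw [coeff_cl, if_pos, coeff_Sps _ _ (by omega) (by omega)] at h2
  · exact (ZMod.natCast_eq_zero_iff _ 3).1 h2
  · push_cast
    rw [show (3 : ZMod 3) = 0 by decide, zero_mul, zero_add]
end
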